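/- There exist absolute constants c > 0 and C > 0 such that for every finite set A of positive reals with |A| ≥ 2, |(A+A)(A+A)(A+A)| ≥ c · |A|^{2 + 1/32} / (log |A|)^C. -/

import Mathlib

/-!
Write `S = A + A`, `a = |A|`, `N = |SSS|`, `m = |SS|`, `q = |S/S|`, `x = |A/A|` and
`H = 1 + log a`. The proof combines four inequalities, in which `K` stands for absolute constants:

* `x ^ 3 * m ^ 6 ≤ 64 * N ^ 8` (`card_ratio_pow_le`);
* `q * m ≤ N ^ 2` (`card_div_mul_card_mul_le`);
* `a ^ 14 ≤ K * H ^ 18 * q ^ 6 * x` (`card_pow_le_card_div`);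
* `a ^ 2 ≤ K * H * m` (`card_sq_le_card_mul`).

Eliminating `m`, `q` and `x` gives `a ^ 90 ≤ K * H ^ 78 * N ^ 44` (`card_pow_ninety_le`), that is
`N ≥ c * a ^ (2 + 1/22) / (log a) ^ (39/22)`, which is stronger than required.

The only geometric input is an elementary incidence bound, `grid_incidence`. A family of increasing
curves in a Cartesian product `P × Q`, any two points of which lie on at most `m` common curves of
the family, is cut by a grid of about `d × d` cells with balanced rows and columns. An increasing curve meets at
most `2 * d + 1` cells, so all but `2 * d + 1` of its points are paired with an earlier point of
the same cell, and there are few pairs of points sharing a cell.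

The first inequality counts incidences between points of `SSA × SSS` and lines parametrised by
`SSA × SSA`: each ratio `s / t` in `A / A` and each pair in `SS × SS` gives one incidence. The
second is the injection `(s / t, u) ↦ (u * s, u * t)`. The fourth bounds the multiplicative energy
of sums `u + v` by third moments of line–point incidences in `A × A`.

For the third, a popular level set `L` of slopes `l`, each having about `n` points of `A × A` on
the line `y = l * x`, is split into consecutive blocks of `T ≈ n ^ (1/6)` slopes. Vector sums of
points on two lines of the same block have slopes in `S / S` that lie between the two given
slopes, so different blocks contribute disjoint sets. Coincidences of slopes coming from two
different pairs of lines are incidences with curves of hyperbolic type, and there are few of them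
by `grid_incidence`; Cauchy–Schwarz then gives about `T ^ 2 * n` distinct slopes per block.
-/

open Finset Pointwise

/-! ### Incidences with increasing curves in a grid -/

/-- A monotone partition of `P` into at most `d + 1` classes such that each point has at most
`|P| / d` later points in its class. The class of `x` is its rank in `P` divided by
`⌈|P| / d⌉`. -/
theorem exists_cells (P : Finset ℝ) (d : ℝ) (hd : 0 < d) :
    ∃ f : ℝ → ℕ, Monotone f ∧ (∀ x ∈ P, (f x : ℝ) ≤ d) ∧
      ∀ x ∈ P, ((P.filter fun y => x < y ∧ f y = f x).card : ℝ) ≤ P.card / d := by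
  set s : ℕ := ⌈(P.card : ℝ) / d⌉₊ with hs
  set rk : ℝ → ℕ := fun x => (P.filter (· < x)).card with hrk
  have hmono : Monotone rk := by
    intro x y hxy
    apply card_le_card
    intro z hz
    simp only [mem_filter] at hz ⊢
    exact ⟨hz.1, hz.2.trans_le hxy⟩
  have hstrict : ∀ x ∈ P, ∀ y, x < y → rk x < rk y := by
    intro x hx y hxy
    apply card_lt_card
    refine ⟨?_, ?_⟩
    · intro z hz
      simp only [mem_filter] at hz ⊢
      exact ⟨hz.1, hz.2.trans hxy⟩
    · intro h
      have := h (mem_filter.2 ⟨hx, hxy⟩)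
      simp at this
  have hlt : ∀ x ∈ P, rk x < P.card := by
    intro x hx
    apply card_lt_card
    refine ⟨filter_subset _ _, fun h => ?_⟩
    have := h hx
    simp at this
  refine ⟨fun x => rk x / s, fun x y h => Nat.div_le_div_right (hmono h), ?_, ?_⟩
  · intro x hx
    have h0 : (0 : ℝ) < P.card := by
      exact_mod_cast card_pos.2 ⟨x, hx⟩
    have hs0 : (P.card : ℝ) / d ≤ s := Nat.le_ceil _
    have hspos : (0 : ℝ) < s := lt_of_lt_of_le (by positivity) hs0
    have h1 : ((rk x / s : ℕ) : ℝ) ≤ (rk x : ℝ) / s := Nat.cast_div_le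
    refine h1.trans ?_
    rw [div_le_iff₀ hspos]
    have h2 : (rk x : ℝ) ≤ P.card := by exact_mod_cast (hlt x hx).le
    rw [div_le_iff₀ hd] at hs0
    linarith
  · intro x hx
    have h0 : (0 : ℝ) < P.card := by
      exact_mod_cast card_pos.2 ⟨x, hx⟩
    have hspos : 0 < s := Nat.ceil_pos.2 (by positivity)
    have h1 : (P.filter fun y => x < y ∧ rk y / s = rk x / s).card ≤
        (Ioo (rk x) (s * (rk x / s) + s)).card := by
      apply card_le_card_of_injOn rk
      · intro y hy
        simp only [coe_filter, Set.mem_ofPred_eq] at hy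
        simp only [coe_Ioo, Set.mem_Ioo]
        refine ⟨hstrict x hx y hy.2.1, ?_⟩
        rw [← hy.2.2]
        have := Nat.mod_lt (rk y) hspos
        have := Nat.div_add_mod (rk y) s
        omega
      · intro y hy z hz hyz
        simp only [coe_filter, Set.mem_ofPred_eq] at hy hz
        by_contra hne
        rcases lt_or_gt_of_ne hne with h | h
        · have := hstrict y hy.1 z h
          omega
        · have := hstrict z hz.1 y h
          omega
    rw [Nat.card_Ioo] at h1
    have h2 : s * (rk x / s) ≤ rk x := Nat.mul_div_le _ _
    have h3 : (P.filter fun y => x < y ∧ rk y / s = rk x / s).card + 1 ≤ s := by omega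
    have h4 : (s : ℝ) < P.card / d + 1 := Nat.ceil_lt_add_one (by positivity)
    have h5 : ((P.filter fun y => x < y ∧ rk y / s = rk x / s).card : ℝ) + 1 ≤ s := by
      exact_mod_cast h3
    linarith

/-- The cells `(f, g)` met by a strictly increasing chain `Z` are determined by `f + g`, so there
are at most `D` of them; in each cell, every point but the lowest forms with the lowest a pair
counted on the right. -/
theorem chain_card_le (Z : Finset (ℝ × ℝ)) (f g : ℝ → ℕ) (hf : Monotone f) (hg : Monotone g)
    (hmono : ∀ p ∈ Z, ∀ q ∈ Z, p.1 < q.1 ↔ p.2 < q.2) (D : ℕ)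
    (hD : ∀ p ∈ Z, f p.1 + g p.2 < D) :
    Z.card ≤ D + ((Z ×ˢ Z).filter fun pq => (pq.1.1 < pq.2.1 ∧ f pq.2.1 = f pq.1.1) ∧
      (pq.1.2 < pq.2.2 ∧ g pq.2.2 = g pq.1.2)).card := by
  set W := (Z ×ˢ Z).filter fun pq => (pq.1.1 < pq.2.1 ∧ f pq.2.1 = f pq.1.1) ∧
      (pq.1.2 < pq.2.2 ∧ g pq.2.2 = g pq.1.2) with hW
  have h1 : Z.card = ∑ c ∈ range D, (Z.filter fun p => f p.1 + g p.2 = c).card :=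
    card_eq_sum_card_fiberwise (fun p hp => by
      simpa using hD p hp)
  have h2 : W.card = ∑ c ∈ range D, (W.filter fun pq => f pq.1.1 + g pq.1.2 = c).card :=
    card_eq_sum_card_fiberwise (fun pq hp => by
      have := hD pq.1 (mem_product.1 (mem_filter.1 hp).1).1
      simpa using this)
  have h3 : ∀ c ∈ range D, (Z.filter fun p => f p.1 + g p.2 = c).card ≤
      1 + (W.filter fun pq => f pq.1.1 + g pq.1.2 = c).card := by
    intro c _
    set F := Z.filter fun p => f p.1 + g p.2 = c with hF
    rcases F.eq_empty_or_nonempty with he | hne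
    · simp [he]
    · obtain ⟨p, hp, hmin⟩ := exists_min_image F (fun p => p.1) hne
      have hpZ := (mem_filter.1 hp).1
      have hpc := (mem_filter.1 hp).2
      have : (F.erase p).card ≤ (W.filter fun pq => f pq.1.1 + g pq.1.2 = c).card := by
        apply card_le_card_of_injOn (fun q => (p, q))
        · intro q hq
          have hq' := mem_erase.1 (mem_coe.1 hq)
          have hqZ := (mem_filter.1 hq'.2).1
          have hqc := (mem_filter.1 hq'.2).2
          have hle := hmin q hq'.2
          have hlt : p.1 < q.1 := by
            rcases hle.lt_or_eq with h | h
            · exact h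
            · exfalso
              apply hq'.1
              have a1 := hmono p hpZ q hqZ
              have a2 := hmono q hqZ p hpZ
              ext
              · exact h.symm
              · rcases lt_trichotomy q.2 p.2 with h' | h' | h'
                · have := a2.2 h'; linarith
                · exact h'
                · have := a1.2 h'; linarith
          have hlt2 := (hmono p hpZ q hqZ).1 hlt
          have e1 := hf hlt.le
          have e2 := hg hlt2.le
          simp only [mem_coe, mem_filter, hW, mem_product]
          refine ⟨⟨⟨hpZ, hqZ⟩, ⟨hlt, by omega⟩, hlt2, by omega⟩, hpc⟩
        · intro a _ b _ h
          exact (Prod.ext_iff.1 h).2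
      have e := card_erase_add_one hp
      omega
  calc Z.card = _ := h1
    _ ≤ ∑ c ∈ range D, (1 + (W.filter fun pq => f pq.1.1 + g pq.1.2 = c).card) := sum_le_sum h3
    _ = D + W.card := by rw [sum_add_distrib, h2]; simp

/-- Incidence bound for increasing curves `Z i` in the Cartesian product `P × Q`, when any two
points lie on at most `m` common curves. The parameter `d` is the number of grid rows and
columns. -/
theorem grid_incidence {ι : Type*} (I : Finset ι) (P Q : Finset ℝ) (Z : ι → Finset (ℝ × ℝ)) (m : ℕ)
    (hsub : ∀ i ∈ I, Z i ⊆ P ×ˢ Q)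
    (hmono : ∀ i ∈ I, ∀ p ∈ Z i, ∀ q ∈ Z i, p.1 < q.1 ↔ p.2 < q.2)
    (hdet : ∀ p q : ℝ × ℝ, p ∈ P ×ˢ Q → q ∈ P ×ˢ Q → p.1 < q.1 → p.2 < q.2 →
      (I.filter fun i => p ∈ Z i ∧ q ∈ Z i).card ≤ m)
    (d : ℝ) (hd : 0 < d) :
    ((∑ i ∈ I, (Z i).card : ℕ) : ℝ) ≤ I.card * (1 + 2 * d) + m * (P.card * Q.card) ^ 2 / d ^ 2 := by
  obtain ⟨f, hf, hf1, hf2⟩ := exists_cells P d hd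
  obtain ⟨g, hg, hg1, hg2⟩ := exists_cells Q d hd
  set D : ℕ := ⌊2 * d⌋₊ + 1 with hD
  set close : (ℝ × ℝ) × (ℝ × ℝ) → Prop := fun pq => (pq.1.1 < pq.2.1 ∧ f pq.2.1 = f pq.1.1) ∧
      (pq.1.2 < pq.2.2 ∧ g pq.2.2 = g pq.1.2) with hclose
  set W := ((P ×ˢ Q) ×ˢ (P ×ˢ Q)).filter close with hW
  have h1 : ∀ i ∈ I, (Z i).card ≤ D + ((Z i ×ˢ Z i).filter close).card := by
    intro i hi
    refine chain_card_le (Z i) f g hf hg (hmono i hi) D ?_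
    intro p hp
    have hp' := mem_product.1 (hsub i hi hp)
    have := hf1 _ hp'.1
    have := hg1 _ hp'.2
    rw [hD, Nat.lt_succ_iff]
    apply Nat.le_floor
    push_cast
    linarith
  have h2 : ∑ i ∈ I, ((Z i ×ˢ Z i).filter close).card ≤ m * W.card := by
    have e1 : ∀ i ∈ I, ((Z i ×ˢ Z i).filter close) =
        W.filter (fun pq => pq.1 ∈ Z i ∧ pq.2 ∈ Z i) := by
      intro i hi
      ext pq
      simp only [mem_filter, hW, mem_product]
      constructor
      · rintro ⟨⟨a, b⟩, c⟩
        exact ⟨⟨⟨mem_product.1 (hsub i hi a), mem_product.1 (hsub i hi b)⟩, c⟩, a, b⟩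
      · rintro ⟨⟨-, c⟩, a, b⟩
        exact ⟨⟨a, b⟩, c⟩
    rw [sum_congr rfl fun i hi => by rw [e1 i hi]]
    have := sum_card_bipartiteAbove_eq_sum_card_bipartiteBelow (s := I) (t := W)
      (fun i pq => pq.1 ∈ Z i ∧ pq.2 ∈ Z i)
    simp only [bipartiteAbove, bipartiteBelow] at this
    rw [this, mul_comm, ← smul_eq_mul]
    apply sum_le_card_nsmul
    intro pq hpq
    obtain ⟨ha, hb⟩ := mem_filter.1 hpq
    exact hdet _ _ (mem_product.1 ha).1 (mem_product.1 ha).2 hb.1.1 hb.2.1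
  have h3 : (W.card : ℝ) ≤ (P.card * Q.card) ^ 2 / d ^ 2 := by
    have e1 : W.card = ∑ p ∈ P ×ˢ Q, (W.filter fun pq => pq.1 = p).card :=
      card_eq_sum_card_fiberwise (fun pq h => (mem_product.1 (mem_filter.1 h).1).1)
    have e2 : ∀ p ∈ P ×ˢ Q, ((W.filter fun pq => pq.1 = p).card : ℝ) ≤
        (P.card / d) * (Q.card / d) := by
      intro p hp
      have hp' := mem_product.1 hp
      have : (W.filter fun pq => pq.1 = p).card ≤
          ((P.filter fun y => p.1 < y ∧ f y = f p.1) ×ˢ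
            (Q.filter fun y => p.2 < y ∧ g y = g p.2)).card := by
        apply card_le_card_of_injOn (fun pq => pq.2)
        · intro pq h
          simp only [coe_filter, Set.mem_ofPred_eq, hW, mem_filter, mem_product, hclose] at h
          simp only [mem_coe, mem_product, mem_filter]
          obtain ⟨⟨⟨-, h1⟩, h2⟩, rfl⟩ := h
          exact ⟨⟨h1.1, h2.1⟩, h1.2, h2.2⟩
        · intro a ha b hb h
          simp only [coe_filter, Set.mem_ofPred_eq] at ha hb
          exact Prod.ext (ha.2.trans hb.2.symm) h
      rw [card_product] at this
      refine (Nat.cast_le.2 this).trans ?_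
      push_cast
      exact mul_le_mul (hf2 _ hp'.1) (hg2 _ hp'.2) (by positivity) (by positivity)
    rw [e1]
    push_cast
    refine (sum_le_sum e2).trans ?_
    rw [sum_const, card_product, nsmul_eq_mul]
    push_cast
    apply le_of_eq
    field_simp
  have h4 : (∑ i ∈ I, (Z i).card) ≤ I.card * D + m * W.card := by
    calc (∑ i ∈ I, (Z i).card) ≤ ∑ i ∈ I, (D + ((Z i ×ˢ Z i).filter close).card) := sum_le_sum h1
      _ = I.card * D + ∑ i ∈ I, ((Z i ×ˢ Z i).filter close).card := by
        rw [sum_add_distrib, sum_const, smul_eq_mul]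
      _ ≤ _ := by omega
  have hDle : (D : ℝ) ≤ 1 + 2 * d := by
    rw [hD]; push_cast
    have := Nat.floor_le (show 0 ≤ 2 * d by positivity)
    linarith
  calc ((∑ i ∈ I, (Z i).card : ℕ) : ℝ) ≤ ((I.card * D + m * W.card : ℕ) : ℝ) := by exact_mod_cast h4
    _ = I.card * D + m * W.card := by push_cast; ring
    _ ≤ I.card * (1 + 2 * d) + m * ((P.card * Q.card) ^ 2 / d ^ 2) := by gcongr
    _ = _ := by ring

/-! ### The inequalities for `|S/S|` and `|A/A|` -/

/-- Cauchy–Schwarz for the fibres of `φ`. -/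
theorem card_sq_le_collisions {α β : Type*} [DecidableEq β] (s : Finset α) (t : Finset β)
    (φ : α → β) (hφ : ∀ x ∈ s, φ x ∈ t) :
    s.card ^ 2 ≤ t.card * ((s ×ˢ s).filter fun xy => φ xy.1 = φ xy.2).card := by
  have h1 : s.card = ∑ b ∈ t, (s.filter fun x => φ x = b).card :=
    card_eq_sum_card_fiberwise hφ
  have h2 : ((s ×ˢ s).filter fun xy => φ xy.1 = φ xy.2).card =
      ∑ b ∈ t, (s.filter fun x => φ x = b).card ^ 2 := by
    rw [card_eq_sum_card_fiberwise (f := fun xy => φ xy.1) (t := t)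
      (fun xy h => hφ _ (mem_product.1 (mem_filter.1 h).1).1)]
    refine sum_congr rfl fun b _ => ?_
    rw [sq, ← card_product]
    congr 1
    ext xy
    simp only [mem_filter, mem_product]
    constructor
    · rintro ⟨⟨⟨a, b⟩, c⟩, d⟩
      exact ⟨⟨a, d⟩, b, c ▸ d⟩
    · rintro ⟨⟨a, b⟩, c, d⟩
      exact ⟨⟨⟨a, c⟩, b.trans d.symm⟩, b⟩
  rw [h1, h2]
  exact sq_sum_le_card_mul_sum_sq

/-- The inequality `|S/S| |SS| ≤ |SSS| ^ 2`: fixing a representation `s / t` of each ratio, the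
map `(s / t, u) ↦ (u * s, u * t)` is injective. -/
theorem card_div_mul_card_mul_le (S : Finset ℝ) (hS : ∀ s ∈ S, 0 < s) :
    (S / S).card * (S * S).card ≤ (S * S * S).card ^ 2 := by
  have h : ∀ θ : ℝ, ∃ s t : ℝ, θ ∈ S / S → s ∈ S ∧ t ∈ S ∧ s / t = θ := by
    intro θ
    by_cases hθ : θ ∈ S / S
    · obtain ⟨s, hs, t, ht, h⟩ := mem_div.1 hθ
      exact ⟨s, t, fun _ => ⟨hs, ht, h⟩⟩
    · exact ⟨0, 0, fun h => absurd h hθ⟩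
  choose s t hst using h
  rw [sq, ← card_product, ← card_product]
  apply card_le_card_of_injOn (fun x => (x.2 * s x.1, x.2 * t x.1))
  · rintro ⟨θ, m⟩ hx
    simp only [coe_product, Set.mem_prod, mem_coe] at hx
    obtain ⟨h1, h2, -⟩ := hst θ hx.1
    simp only [coe_product, Set.mem_prod, mem_coe]
    exact ⟨mul_mem_mul hx.2 h1, mul_mem_mul hx.2 h2⟩
  · rintro ⟨θ, m⟩ hx ⟨θ', m'⟩ hx' h
    simp only [coe_product, Set.mem_prod, mem_coe] at hx hx'
    obtain ⟨h1, h2, h3⟩ := hst θ hx.1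
    obtain ⟨h1', h2', h3'⟩ := hst θ' hx'.1
    obtain ⟨u, hu, v, hv, rfl⟩ := mem_mul.1 hx.2
    obtain ⟨u', hu', v', hv', rfl⟩ := mem_mul.1 hx'.2
    simp only [Prod.mk.injEq] at h
    have := hS _ h1; have := hS _ h2; have := hS _ h1'; have := hS _ h2'
    have := hS _ hu; have := hS _ hv; have := hS _ hu'; have := hS _ hv'
    have hm : 0 < u * v := by positivity
    have hm' : 0 < u' * v' := by positivity
    have hθ : θ = θ' := by
      rw [← h3, ← h3']
      rw [← mul_div_mul_left (s θ) (t θ) hm.ne', ← mul_div_mul_left (s θ') (t θ') hm'.ne',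
        h.1, h.2]
    subst hθ
    have := mul_right_cancel₀ (hS _ h1).ne' h.1
    rw [Prod.mk.injEq]
    exact ⟨rfl, this⟩

/-- The inequality `|A/A| ^ 3 |SS| ^ 6 ≤ 64 |SSS| ^ 8` with `S = A + A`. For a ratio `s / t` in
`A / A` and `m, n ∈ SS`, the point `(m * s, n * (s + t))` lies on the line
`Y * (m * t) = (n * t) * (m * t + X)`, and the ratio with `m` and `n` can be recovered from this
incidence. -/
theorem card_ratio_pow_le (A : Finset ℝ) (hA : ∀ x ∈ A, 0 < x) :
    (A / A).card ^ 3 * ((A + A) * (A + A)).card ^ 6 ≤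
      64 * ((A + A) * (A + A) * (A + A)).card ^ 8 := by
  set S := A + A with hS
  have hSpos : ∀ s ∈ S, 0 < s := by
    intro s hs
    obtain ⟨a, ha, b, hb, rfl⟩ := mem_add.1 hs
    have := hA _ ha; have := hA _ hb
    positivity
  set M := S * S with hM
  have hMpos : ∀ s ∈ M, 0 < s := by
    intro s hs
    obtain ⟨a, ha, b, hb, rfl⟩ := mem_mul.1 hs
    have := hSpos _ ha; have := hSpos _ hb
    positivity
  set N := (M * S).card with hN
  -- `2 * A ⊆ S`
  have hAM : (M * A).card ≤ N := by
    apply card_le_card_of_injOn (fun x => 2 * x)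
    · intro x hx
      obtain ⟨m, hm, a, ha, rfl⟩ := mem_mul.1 (mem_coe.1 hx)
      rw [mem_coe]
      exact mem_mul.2 ⟨m, hm, a + a, add_mem_add ha ha, by ring⟩
    · intro x _ y _ h
      exact mul_left_cancel₀ two_ne_zero h
  rcases A.eq_empty_or_nonempty with rfl | hne
  · simp
  have hNpos : 0 < N := by
    have : S.Nonempty := hne.add hne
    exact card_pos.2 ((this.mul this).mul this)
  set P := M * A with hP
  have hPpos : ∀ s ∈ P, 0 < s := by
    intro s hs
    obtain ⟨a, ha, b, hb, rfl⟩ := mem_mul.1 hs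
    have := hMpos _ ha; have := hA _ hb
    positivity
  set Z : ℝ × ℝ → Finset (ℝ × ℝ) := fun yz => (P ×ˢ (M * S)).filter
    fun pq => pq.2 * yz.1 = yz.2 * (yz.1 + pq.1) with hZ
  -- `d ^ 3 = N ^ 2` balances the two terms `N ^ 2 * d` and `N ^ 4 / d ^ 2` of the incidence bound
  set d : ℝ := ((N : ℝ) ^ 2) ^ ((1 : ℝ) / 3) with hd
  have hd3 : d ^ 3 = (N : ℝ) ^ 2 := by
    rw [hd, ← Real.rpow_natCast, ← Real.rpow_mul (by positivity)]
    norm_num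
  have hN1 : (1 : ℝ) ≤ N := by exact_mod_cast hNpos
  have hd1 : 1 ≤ d := Real.one_le_rpow (by nlinarith) (by norm_num)
  have hinc := grid_incidence (P ×ˢ P) P (M * S) Z 1 (fun i _ => filter_subset _ _) ?_ ?_ d
    (by linarith)
  · have hlow : (A / A).card * (M.card * M.card) ≤ ∑ i ∈ P ×ˢ P, (Z i).card := by
      rw [← card_sigma, ← card_product, ← card_product]
      have h : ∀ θ : ℝ, ∃ s t : ℝ, θ ∈ A / A → s ∈ A ∧ t ∈ A ∧ s / t = θ := by
        intro θ
        by_cases hθ : θ ∈ A / A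
        · obtain ⟨s, hs, t, ht, h⟩ := mem_div.1 hθ
          exact ⟨s, t, fun _ => ⟨hs, ht, h⟩⟩
        · exact ⟨0, 0, fun h => absurd h hθ⟩
      choose s t hst using h
      apply card_le_card_of_injOn (fun x => (⟨(x.2.1 * t x.1, x.2.2 * t x.1),
        (x.2.1 * s x.1, x.2.2 * (s x.1 + t x.1))⟩ : (_ : ℝ × ℝ) × (ℝ × ℝ)))
      · rintro ⟨θ, m, n⟩ hx
        simp only [coe_product, Set.mem_prod, mem_coe] at hx
        obtain ⟨h1, h2, -⟩ := hst θ hx.1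
        simp only [mem_coe, mem_sigma, mem_product, hZ, mem_filter]
        refine ⟨⟨mul_mem_mul hx.2.1 h2, mul_mem_mul hx.2.2 h2⟩,
          ⟨mul_mem_mul hx.2.1 h1, mul_mem_mul hx.2.2 (add_mem_add h1 h2)⟩, by ring⟩
      · rintro ⟨θ, m, n⟩ hx ⟨θ', m', n'⟩ hx' h
        simp only [coe_product, Set.mem_prod, mem_coe] at hx hx'
        obtain ⟨h1, h2, h3⟩ := hst θ hx.1
        obtain ⟨h1', h2', h3'⟩ := hst θ' hx'.1
        simp only [Sigma.mk.injEq, Prod.mk.injEq, heq_eq_eq] at h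
        have hm := hMpos _ hx.2.1
        have hm' := hMpos _ hx'.2.1
        have hθ : θ = θ' := by
          rw [← h3, ← h3']
          rw [← mul_div_mul_left (s θ) (t θ) hm.ne', ← mul_div_mul_left (s θ') (t θ') hm'.ne',
            h.1.1, h.2.1]
        subst hθ
        have e1 := mul_right_cancel₀ (hA _ h2).ne' h.1.1
        have e2 := mul_right_cancel₀ (hA _ h2).ne' h.1.2
        rw [Prod.mk.injEq, Prod.mk.injEq]
        exact ⟨rfl, e1, e2⟩
    have h1 : ((A / A).card : ℝ) * (M.card * M.card) ≤ 4 * d ^ 4 := by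
      have e0 : ((A / A).card : ℝ) * (M.card * M.card) ≤ ((∑ i ∈ P ×ˢ P, (Z i).card : ℕ) : ℝ) := by
        exact_mod_cast hlow
      refine e0.trans (hinc.trans ?_)
      rw [card_product]
      push_cast
      have e1 : (P.card : ℝ) ≤ N := by exact_mod_cast hAM
      have e2 : (P.card : ℝ) * P.card * (1 + 2 * d) ≤ N * N * (1 + 2 * d) := by gcongr
      have e3 : 1 * ((P.card : ℝ) * N) ^ 2 / d ^ 2 ≤ 1 * ((N : ℝ) * N) ^ 2 / d ^ 2 := by gcongr
      have e4 : 1 * ((N : ℝ) * N) ^ 2 / d ^ 2 = d ^ 4 := by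
        rw [div_eq_iff (by positivity)]
        have : ((N : ℝ) * N) = d ^ 3 := by rw [hd3]; ring
        rw [this]; ring
      have e5 : (N : ℝ) * N * (1 + 2 * d) = d ^ 3 + 2 * d ^ 4 := by
        have : ((N : ℝ) * N) = d ^ 3 := by rw [hd3]; ring
        rw [this]; ring
      have e6 : d ^ 3 ≤ d ^ 4 := pow_le_pow_right₀ hd1 (by norm_num)
      rw [← hN]
      linarith
    have h2 : (((A / A).card : ℝ) * (M.card * M.card)) ^ 3 ≤ (4 * d ^ 4) ^ 3 :=
      pow_le_pow_left₀ (by positivity) h1 3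
    have h3 : (4 * d ^ 4) ^ 3 = 64 * (N : ℝ) ^ 8 := by
      have : (N : ℝ) ^ 8 = (d ^ 3) ^ 4 := by rw [hd3]; ring
      rw [this]; ring
    rw [h3] at h2
    have h4 : (((A / A).card : ℝ) * (M.card * M.card)) ^ 3 =
      ((A / A).card : ℝ) ^ 3 * (M.card : ℝ) ^ 6 := by ring
    rw [h4] at h2
    exact_mod_cast h2
  · rintro ⟨y, z⟩ hyz ⟨p, q⟩ hp ⟨p', q'⟩ hp'
    simp only [hZ, mem_filter, mem_product] at hyz hp hp' ⊢
    have hy := hPpos _ hyz.1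
    have hz := hPpos _ hyz.2
    have key : (q' - q) * y = z * (p' - p) := by linarith [hp.2, hp'.2]
    constructor
    · intro h
      have : 0 < (q' - q) * y := by rw [key]; exact mul_pos hz (by linarith)
      have := (mul_pos_iff_of_pos_right hy).1 this
      linarith
    · intro h
      have : 0 < z * (p' - p) := by rw [← key]; exact mul_pos (by linarith) hy
      have := (mul_pos_iff_of_pos_left hz).1 this
      linarith
  · rintro ⟨p, q⟩ ⟨p', q'⟩ _ _ h1 h2
    rw [card_le_one]
    rintro ⟨y, z⟩ hi ⟨y', z'⟩ hi'
    simp only [hZ, mem_filter, mem_product] at hi hi' h1 h2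
    have hy := hPpos _ hi.1.1
    have hz := hPpos _ hi.1.2
    have hy' := hPpos _ hi'.1.1
    have hz' := hPpos _ hi'.1.2
    have k1 : (q' - q) * y = z * (p' - p) := by linarith [hi.2.1.2, hi.2.2.2]
    have k2 : (q' - q) * y' = z' * (p' - p) := by linarith [hi'.2.1.2, hi'.2.2.2]
    have k3 : z * y' = z' * y := by
      have : (p' - p) * (z * y') = (p' - p) * (z' * y) := by linear_combination y * k2 - y' * k1
      exact mul_left_cancel₀ (by linarith) this
    have k4 : z = z' := by
      have a1 := hi.2.1.2
      have a2 := hi'.2.1.2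
      have : (y * y') * z = (y * y') * z' := by
        linear_combination (-y') * a1 + y * a2 - p * k3
      exact mul_left_cancel₀ (by positivity) this
    subst k4
    have : y' = y := mul_left_cancel₀ hz.ne' k3
    rw [this]

/-! ### Multiplicative energy of sums -/

/-- The points of `A × A` on the line `y = l.1 * x + l.2`. -/
noncomputable def linePts (A : Finset ℝ) (l : (_ : ℝ) × ℝ) : Finset (ℝ × ℝ) :=
  (A ×ˢ A).filter fun p => p.2 - l.1 * p.1 = l.2

theorem card_linePts_le (A : Finset ℝ) (l : (_ : ℝ) × ℝ) : (linePts A l).card ≤ A.card := by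
  apply card_le_card_of_injOn Prod.fst
  · intro p hp
    exact (mem_product.1 (mem_filter.1 (mem_coe.1 hp)).1).1
  · intro p hp q hq h
    have h1 := (mem_filter.1 (mem_coe.1 hp)).2
    have h2 := (mem_filter.1 (mem_coe.1 hq)).2
    rw [← h] at h2
    exact Prod.ext h (by linarith)

/-- The number of lines of positive slope with at least `k ≥ 2` points in `A × A` is
`O(|A| ^ 4 / k ^ 3)`. -/
theorem card_rich_lines (A : Finset ℝ) (I : Finset ((_ : ℝ) × ℝ)) (hI : ∀ l ∈ I, 0 < l.1)
    (k : ℕ) (hk : 2 ≤ k) (hr : ∀ l ∈ I, k ≤ (linePts A l).card) :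
    (I.card : ℝ) * (k : ℝ) ^ 3 ≤ 256 * (A.card : ℝ) ^ 4 := by
  have hk' : (2 : ℝ) ≤ k := by exact_mod_cast hk
  have hinc := grid_incidence I A A (linePts A) 1 (fun i _ => filter_subset _ _) ?_ ?_ ((k : ℝ) / 8)
    (by positivity)
  · have h1 : I.card * k ≤ ∑ i ∈ I, (linePts A i).card := by
      rw [← smul_eq_mul]
      exact card_nsmul_le_sum _ _ _ hr
    have h2 : (I.card : ℝ) * k ≤ ((∑ i ∈ I, (linePts A i).card : ℕ) : ℝ) := by exact_mod_cast h1
    have h3 := h2.trans hinc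
    have h4 : (I.card : ℝ) * (k / 4) ≤ I.card * (k - (1 + 2 * (k / 8))) := by
      gcongr
      linarith
    have h5 : (I.card : ℝ) * (k / 4) ≤ 64 * (A.card : ℝ) ^ 4 / k ^ 2 := by
      have : ((1 : ℕ) : ℝ) * ((A.card : ℝ) * A.card) ^ 2 / ((k : ℝ) / 8) ^ 2 =
          64 * (A.card : ℝ) ^ 4 / k ^ 2 := by
        push_cast
        field_simp
        ring
      rw [this] at h3
      linarith
    rw [le_div_iff₀ (by positivity)] at h5
    nlinarith
  · intro l hl p hp q hq
    have h1 := (mem_filter.1 hp).2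
    have h2 := (mem_filter.1 hq).2
    have key : q.2 - p.2 = l.1 * (q.1 - p.1) := by linarith
    have hpos := hI l hl
    constructor
    · intro h
      have : 0 < q.2 - p.2 := by rw [key]; exact mul_pos hpos (by linarith)
      linarith
    · intro h
      have : 0 < l.1 * (q.1 - p.1) := by rw [← key]; linarith
      have := (mul_pos_iff_of_pos_left hpos).1 this
      linarith
  · intro p q _ _ h1 _
    rw [card_le_one]
    rintro ⟨l, v⟩ hi ⟨l', v'⟩ hi'
    simp only [linePts, mem_filter] at hi hi'
    have e : l = l' := by
      have : (q.1 - p.1) * l = (q.1 - p.1) * l' := by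
        linarith [hi.2.1.2, hi.2.2.2, hi'.2.1.2, hi'.2.2.2]
      exact mul_left_cancel₀ (by linarith) this
    subst e
    have : v = v' := by rw [← hi.2.1.2, ← hi'.2.1.2]
    rw [this]

theorem cube_le_sum_sq (n : ℕ) (hn : 2 ≤ n) : n ^ 3 ≤ 3 * ∑ k ∈ Icc 2 n, k ^ 2 := by
  induction n, hn using Nat.le_induction with
  | base => decide
  | succ n hn ih =>
    rw [sum_Icc_succ_top (by omega)]
    nlinarith

theorem sum_inv_le (n : ℕ) : ∑ k ∈ Icc 1 n, ((k : ℝ))⁻¹ ≤ 1 + Real.log n := by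
  have := harmonic_le_one_add_log n
  rw [harmonic_eq_sum_Icc] at this
  push_cast at this
  exact this

/-- Third moment of the incidences of lines with `A × A`, by summation of `card_rich_lines` over
`k`. -/
theorem sum_card_linePts_cube (A : Finset ℝ) (I : Finset ((_ : ℝ) × ℝ)) (hI : ∀ l ∈ I, 0 < l.1)
    (h2 : ∀ l ∈ I, 2 ≤ (linePts A l).card) :
    ((∑ l ∈ I, (linePts A l).card ^ 3 : ℕ) : ℝ) ≤
      768 * (A.card : ℝ) ^ 4 * (1 + Real.log A.card) := by
  have h1 : ∑ l ∈ I, (linePts A l).card ^ 3 ≤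
      3 * ∑ k ∈ Icc 2 A.card, (I.filter fun l => k ≤ (linePts A l).card).card * k ^ 2 := by
    calc ∑ l ∈ I, (linePts A l).card ^ 3
        ≤ ∑ l ∈ I, 3 * ∑ k ∈ Icc 2 (linePts A l).card, k ^ 2 :=
          sum_le_sum fun l hl => cube_le_sum_sq _ (h2 l hl)
      _ = 3 * ∑ l ∈ I, ∑ k ∈ Icc 2 A.card, if k ≤ (linePts A l).card then k ^ 2 else 0 := by
          rw [mul_sum]
          refine sum_congr rfl fun l _ => ?_
          congr 1
          rw [← sum_filter]
          refine sum_congr ?_ fun _ _ => rfl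
          ext k
          have := card_linePts_le A l
          simp only [mem_Icc, mem_filter]
          omega
      _ = _ := by
          rw [sum_comm]
          congr 1
          refine sum_congr rfl fun k _ => ?_
          rw [← sum_filter, sum_const, smul_eq_mul]
  have h3 : ∀ k ∈ Icc 2 A.card,
      ((I.filter fun l => k ≤ (linePts A l).card).card : ℝ) * (k : ℝ) ^ 2 ≤
        256 * (A.card : ℝ) ^ 4 * (k : ℝ)⁻¹ := by
    intro k hk
    have hk2 := (mem_Icc.1 hk).1
    have hk0 : (0 : ℝ) < k := by exact_mod_cast (by omega : 0 < k)
    have := card_rich_lines A (I.filter fun l => k ≤ (linePts A l).card)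
      (fun l hl => hI l (mem_filter.1 hl).1) k hk2 (fun l hl => (mem_filter.1 hl).2)
    rw [← div_eq_mul_inv, le_div_iff₀ hk0]
    linarith
  calc ((∑ l ∈ I, (linePts A l).card ^ 3 : ℕ) : ℝ)
      ≤ 3 * ∑ k ∈ Icc 2 A.card,
        ((I.filter fun l => k ≤ (linePts A l).card).card : ℝ) * (k : ℝ) ^ 2 := by
        exact_mod_cast h1
    _ ≤ 3 * ∑ k ∈ Icc 2 A.card, 256 * (A.card : ℝ) ^ 4 * (k : ℝ)⁻¹ := by
        exact mul_le_mul_of_nonneg_left (sum_le_sum h3) (by norm_num)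
    _ ≤ 3 * (256 * (A.card : ℝ) ^ 4 * (1 + Real.log A.card)) := by
        rw [← mul_sum]
        gcongr
        refine le_trans ?_ (sum_inv_le A.card)
        apply sum_le_sum_of_subset_of_nonneg
        · exact Icc_subset_Icc_left (by norm_num)
        · intros; positivity
    _ = _ := by ring

/-- Pairs `(u, v)` in `(A × A)²` whose coordinate sums have ratio `l`. -/
noncomputable def ratioPairs (A : Finset ℝ) (l : ℝ) : Finset ((ℝ × ℝ) × (ℝ × ℝ)) :=
  ((A ×ˢ A) ×ˢ (A ×ˢ A)).filter fun w => w.1.1 + w.1.2 = l * (w.2.1 + w.2.2)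

/-- The equation `a + b = l * (c + d)` says that `a - l * c` and `b - l * d` are opposite, so the
number of its solutions is at most the second moment of the point counts of the lines of slope `l`.
Lines with one point contribute at most `|A| ^ 2` to it, and the second moment of the lines with at
least two points is bounded by Cauchy–Schwarz between the first and third moments. -/
theorem card_ratioPairs_sq_le (A : Finset ℝ) (l : ℝ) :
    ∃ V : Finset ℝ, (∀ v ∈ V, 2 ≤ (linePts A ⟨l, v⟩).card) ∧
      (ratioPairs A l).card ^ 2 ≤ 2 * A.card ^ 2 * (ratioPairs A l).card +
        4 * A.card ^ 2 * ∑ v ∈ V, (linePts A ⟨l, v⟩).card ^ 3 := by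
  set V₀ := (A ×ˢ A).image fun p => p.2 - l * p.1 with hV₀
  set W := V₀ ∪ -V₀ with hW
  set n : ℝ → ℕ := fun v => (linePts A ⟨l, v⟩).card with hn
  have hWneg : ∀ v ∈ W, -v ∈ W := by
    intro v hv
    simp only [hW, mem_union, mem_neg'] at hv ⊢
    rw [neg_neg]
    exact hv.symm
  have hVW : ∀ p ∈ A ×ˢ A, p.2 - l * p.1 ∈ W := fun p hp =>
    mem_union_left _ (mem_image_of_mem _ hp)
  have hsum : ∑ v ∈ W, n v = A.card ^ 2 := by
    rw [sq, ← card_product, card_eq_sum_card_fiberwise hVW]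
    rfl
  have hr1 : (ratioPairs A l).card ≤ ∑ v ∈ W, n v * n (-v) := by
    simp only [hn, ← card_product]
    rw [← card_sigma]
    apply card_le_card_of_injOn (fun w => (⟨w.1.1 - l * w.2.1,
      ((w.2.1, w.1.1), (w.2.2, w.1.2))⟩ : (_ : ℝ) × ((ℝ × ℝ) × (ℝ × ℝ))))
    · rintro ⟨⟨a, b⟩, c, d⟩ hw
      simp only [ratioPairs, coe_filter, mem_product, Set.mem_ofPred_eq] at hw
      simp only [mem_coe, mem_sigma, mem_product, linePts, mem_filter]
      refine ⟨hVW (c, a) (mem_product.2 ⟨hw.1.2.1, hw.1.1.1⟩), ⟨⟨hw.1.2.1, hw.1.1.1⟩, trivial⟩,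
        ⟨hw.1.2.2, hw.1.1.2⟩, by linarith [hw.2]⟩
    · rintro ⟨⟨a, b⟩, c, d⟩ _ ⟨⟨a', b'⟩, c', d'⟩ _ h
      simp only [Sigma.mk.injEq, heq_eq_eq, Prod.mk.injEq] at h
      obtain ⟨-, ⟨h1, h2⟩, h3, h4⟩ := h
      rw [h1, h2, h3, h4]
  have hr2 : ∑ v ∈ W, n v * n (-v) ≤ ∑ v ∈ W, n v ^ 2 := by
    have e : ∑ v ∈ W, n (-v) ^ 2 = ∑ v ∈ W, n v ^ 2 :=
      sum_nbij' (fun v => -v) (fun v => -v) hWneg hWneg (by simp) (by simp) (by simp)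
    have : 2 * ∑ v ∈ W, n v * n (-v) ≤ ∑ v ∈ W, n v ^ 2 + ∑ v ∈ W, n (-v) ^ 2 := by
      rw [mul_sum, ← sum_add_distrib]
      refine sum_le_sum fun v _ => ?_
      have := two_mul_le_add_sq (n v) (n (-v))
      linarith
    omega
  refine ⟨W.filter fun v => 2 ≤ n v, fun v hv => (mem_filter.1 hv).2, ?_⟩
  set V := W.filter fun v => 2 ≤ n v with hV
  have hr3 : ∑ v ∈ W, n v ^ 2 ≤ A.card ^ 2 + ∑ v ∈ V, n v ^ 2 := by
    rw [← hsum, hV, sum_filter, ← sum_add_distrib]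
    refine sum_le_sum fun v _ => ?_
    split_ifs with h
    · omega
    · interval_cases n v <;> simp
  have hr4 : (∑ v ∈ V, n v ^ 2) ^ 2 ≤ A.card ^ 2 * ∑ v ∈ V, n v ^ 3 := by
    have e1 : (∑ v ∈ V, n v ^ 2) ^ 2 ≤ (∑ v ∈ V, n v) * ∑ v ∈ V, n v ^ 3 :=
      sum_sq_le_sum_mul_sum_of_sq_le_mul V (fun _ _ => Nat.zero_le _) (fun _ _ => Nat.zero_le _)
        (fun v _ => le_of_eq (by ring))
    refine e1.trans (Nat.mul_le_mul_right _ ?_)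
    rw [← hsum]
    exact sum_le_sum_of_subset (filter_subset _ _)
  set r := (ratioPairs A l).card
  set R := ∑ v ∈ V, n v ^ 2
  have hr : r ≤ A.card ^ 2 + R := hr1.trans (hr2.trans hr3)
  have h0 : r ^ 2 ≤ 2 * A.card ^ 2 * r + 4 * R ^ 2 := by
    by_cases h : r ≤ 2 * A.card ^ 2
    · nlinarith
    · have : r ≤ 2 * R := by omega
      nlinarith
  change r ^ 2 ≤ 2 * A.card ^ 2 * r + 4 * A.card ^ 2 * ∑ v ∈ V, n v ^ 3
  nlinarith

/-- The inequality `|A| ^ 2 ≤ K * (1 + log |A|) * |SS|` with `S = A + A`: Cauchy–Schwarz for the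
map `(u, v) ↦ (u.1 + u.2) * (v.1 + v.2)`, whose collisions are pairs of elements of
`ratioPairs A l` with the same ratio `l`. -/
theorem card_sq_le_card_mul (A : Finset ℝ) (hA : ∀ x ∈ A, 0 < x) (hne : A.Nonempty) :
    (A.card : ℝ) ^ 2 ≤ 3100 * (1 + Real.log A.card) * ((A + A) * (A + A)).card := by
  set S := A + A with hS
  set a := A.card with ha
  have ha1 : 1 ≤ a := card_pos.2 hne
  have ha1' : (1 : ℝ) ≤ a := by exact_mod_cast ha1
  have hlog : 0 ≤ Real.log a := Real.log_nonneg ha1'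
  have hSpos : ∀ s ∈ S, 0 < s := by
    intro s hs
    obtain ⟨a, ha, b, hb, rfl⟩ := mem_add.1 hs
    have := hA _ ha; have := hA _ hb
    positivity
  set X := (A ×ˢ A) ×ˢ (A ×ˢ A) with hX
  have hXcard : X.card = a ^ 4 := by
    rw [hX, card_product, card_product]; ring
  set φ : (ℝ × ℝ) × (ℝ × ℝ) → ℝ := fun w => (w.1.1 + w.1.2) * (w.2.1 + w.2.2) with hφ
  have hcs := card_sq_le_collisions X (S * S) φ (by
    intro w hw
    obtain ⟨h1, h2⟩ := mem_product.1 hw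
    obtain ⟨h1, h3⟩ := mem_product.1 h1
    obtain ⟨h2, h4⟩ := mem_product.1 h2
    exact mul_mem_mul (add_mem_add h1 h3) (add_mem_add h2 h4))
  set E := ((X ×ˢ X).filter fun xy => φ xy.1 = φ xy.2).card with hE
  have hE1 : E ≤ ∑ l ∈ S / S, (ratioPairs A l).card ^ 2 := by
    simp only [sq, ← card_product]
    rw [← card_sigma]
    apply card_le_card_of_injOn (fun z => (⟨(z.1.1.1 + z.1.1.2) / (z.2.1.1 + z.2.1.2),
      ((z.1.1, z.2.1), (z.2.2, z.1.2))⟩ :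
        (_ : ℝ) × (((ℝ × ℝ) × (ℝ × ℝ)) × ((ℝ × ℝ) × (ℝ × ℝ)))))
    · rintro ⟨⟨⟨a, b⟩, c, d⟩, ⟨a', b'⟩, c', d'⟩ hz
      simp only [coe_filter, Set.mem_ofPred_eq, hX, mem_product, hφ] at hz
      obtain ⟨⟨⟨⟨h1, h2⟩, h3, h4⟩, ⟨h5, h6⟩, h7, h8⟩, h9⟩ := hz
      have := hA _ h1; have := hA _ h2; have := hA _ h3; have := hA _ h4
      have := hA _ h5; have := hA _ h6; have := hA _ h7; have := hA _ h8
      have p1 : 0 < a + b := by positivity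
      have p2 : 0 < a' + b' := by positivity
      have p3 : 0 < c + d := by positivity
      simp only [mem_coe, mem_sigma, mem_product, ratioPairs, mem_filter]
      refine ⟨div_mem_div (add_mem_add h1 h2) (add_mem_add h5 h6), ⟨⟨⟨h1, h2⟩, h5, h6⟩, ?_⟩,
        ⟨⟨h7, h8⟩, h3, h4⟩, ?_⟩
      · field_simp
      · field_simp
        linarith
    · rintro ⟨⟨u, v⟩, u', v'⟩ _ ⟨⟨x, y⟩, x', y'⟩ _ h
      simp only [Sigma.mk.injEq, heq_eq_eq, Prod.mk.injEq] at h
      obtain ⟨-, ⟨h1, h2⟩, h3, h4⟩ := h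
      rw [h1, h2, h3, h4]
  have hr : ∑ l ∈ S / S, (ratioPairs A l).card ≤ a ^ 4 := by
    rw [← hXcard, ← card_sigma]
    apply card_le_card_of_injOn (fun z => z.2)
    · rintro ⟨l, w⟩ hz
      exact (mem_filter.1 (mem_sigma.1 (mem_coe.1 hz)).2).1
    · rintro ⟨l, w⟩ hz ⟨l', w'⟩ hz' h
      simp only at h
      subst h
      have h1 := mem_filter.1 (mem_sigma.1 (mem_coe.1 hz)).2
      have h2 := mem_filter.1 (mem_sigma.1 (mem_coe.1 hz')).2
      have h3 := mem_product.1 (mem_product.1 h1.1).2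
      have := hA _ h3.1
      have := hA _ h3.2
      have e : l * (w.2.1 + w.2.2) = l' * (w.2.1 + w.2.2) := h1.2.symm.trans h2.2
      have := mul_right_cancel₀ (by positivity) e
      rw [this]
  choose V hV1 hV2 using card_ratioPairs_sq_le A
  set C := ∑ l ∈ S / S, ∑ v ∈ V l, (linePts A ⟨l, v⟩).card ^ 3 with hC
  have hCle : (C : ℝ) ≤ 768 * (a : ℝ) ^ 4 * (1 + Real.log a) := by
    rw [hC, sum_sigma']
    apply sum_card_linePts_cube A ((S / S).sigma V)
    · intro l hl
      obtain ⟨s, hs, t, ht, h⟩ := mem_div.1 (mem_sigma.1 hl).1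
      rw [← h]
      exact div_pos (hSpos _ hs) (hSpos _ ht)
    · intro l hl
      exact hV1 _ _ (mem_sigma.1 hl).2
  have hE2 : E ≤ 2 * a ^ 2 * a ^ 4 + 4 * a ^ 2 * C := by
    calc E ≤ _ := hE1
      _ ≤ ∑ l ∈ S / S, (2 * a ^ 2 * (ratioPairs A l).card +
        4 * a ^ 2 * ∑ v ∈ V l, (linePts A ⟨l, v⟩).card ^ 3) := sum_le_sum fun l _ => hV2 l
      _ = 2 * a ^ 2 * ∑ l ∈ S / S, (ratioPairs A l).card + 4 * a ^ 2 * C := by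
        rw [sum_add_distrib, ← mul_sum, ← mul_sum]
      _ ≤ _ := by gcongr
  have hE3 : (E : ℝ) ≤ 3100 * (a : ℝ) ^ 6 * (1 + Real.log a) := by
    have e1 : (E : ℝ) ≤ 2 * (a : ℝ) ^ 2 * (a : ℝ) ^ 4 + 4 * (a : ℝ) ^ 2 * C := by exact_mod_cast hE2
    have e2 : 4 * (a : ℝ) ^ 2 * C ≤ 4 * (a : ℝ) ^ 2 * (768 * (a : ℝ) ^ 4 * (1 + Real.log a)) := by
      gcongr
    have e3 : 0 ≤ (a : ℝ) ^ 6 * Real.log a := by positivity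
    have e4 : 0 ≤ (a : ℝ) ^ 6 := by positivity
    nlinarith
  have hfin : ((a : ℝ) ^ 4) ^ 2 ≤ (S * S).card * E := by
    rw [hXcard] at hcs
    exact_mod_cast hcs
  have h6 : (0 : ℝ) < (a : ℝ) ^ 6 := by positivity
  have : (a : ℝ) ^ 6 * (a : ℝ) ^ 2 ≤ (a : ℝ) ^ 6 * (3100 * (1 + Real.log a) * (S * S).card) := by
    calc (a : ℝ) ^ 6 * (a : ℝ) ^ 2 = ((a : ℝ) ^ 4) ^ 2 := by ring
      _ ≤ ((S * S).card : ℝ) * E := hfin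
      _ ≤ ((S * S).card : ℝ) * (3100 * (a : ℝ) ^ 6 * (1 + Real.log a)) := by gcongr
      _ = _ := by ring
  exact le_of_mul_le_mul_left this h6

/-! ### Slopes of vector sums -/

/-- The weighted mean of `l₁` and `l₂` with weights `x₁` and `x₂`; equivalently the slope of the
sum of the vectors `(x₁, l₁ * x₁)` and `(x₂, l₂ * x₂)`. -/
noncomputable def wmean (l₁ l₂ x₁ x₂ : ℝ) : ℝ := (l₁ * x₁ + l₂ * x₂) / (x₁ + x₂)

theorem wmean_lt_iff {l₁ l₂ x y y' : ℝ} (h : l₁ < l₂) (hx : 0 < x) (hy : 0 < y) (hy' : 0 < y') :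
    wmean l₁ l₂ x y < wmean l₁ l₂ x y' ↔ y < y' := by
  rw [wmean, wmean, div_lt_div_iff₀ (by positivity) (by positivity)]
  have key : (l₁ * x + l₂ * y') * (x + y) - (l₁ * x + l₂ * y) * (x + y') =
    ((l₂ - l₁) * x) * (y' - y) := by ring
  have hpos : 0 < (l₂ - l₁) * x := mul_pos (by linarith) hx
  rw [← sub_pos, key, mul_pos_iff_of_pos_left hpos, sub_pos]

theorem wmean_eq_wmean_iff {l₁ l₂ l₃ l₄ x₁ x₂ x₃ x₄ : ℝ} (h₁ : 0 < x₁) (h₂ : 0 < x₂) (h₃ : 0 < x₃)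
    (h₄ : 0 < x₄) : wmean l₁ l₂ x₁ x₂ = wmean l₃ l₄ x₃ x₄ ↔
      (l₁ * x₁ + l₂ * x₂) * (x₃ + x₄) = (l₃ * x₃ + l₄ * x₄) * (x₁ + x₂) := by
  rw [wmean, wmean, div_eq_div_iff (by positivity) (by positivity)]

/-- A quadratic equation with three distinct roots is trivial. -/
theorem quadratic_eq_zero {c₀ c₁ c₂ r s t : ℝ} (hr : c₀ * r ^ 2 + c₁ * r + c₂ = 0)
    (hs : c₀ * s ^ 2 + c₁ * s + c₂ = 0) (ht : c₀ * t ^ 2 + c₁ * t + c₂ = 0)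
    (hrs : r ≠ s) (hrt : r ≠ t) (hst : s ≠ t) : c₀ = 0 ∧ c₂ = 0 := by
  have e1 : c₀ * (r + s) + c₁ = 0 :=
    mul_left_cancel₀ (sub_ne_zero.2 hrs) (by linear_combination hr - hs)
  have e2 : c₀ * (r + t) + c₁ = 0 :=
    mul_left_cancel₀ (sub_ne_zero.2 hrt) (by linear_combination hr - ht)
  have e3 : c₀ = 0 := mul_left_cancel₀ (sub_ne_zero.2 hst) (by linear_combination e1 - e2)
  subst e3
  have e4 : c₁ = 0 := by linarith
  subst e4
  exact ⟨rfl, by linarith⟩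

/-- Two points lie on at most two of the curves
`{(x, y) | wmean l₁ l₂ j.1 x = wmean l₃ l₄ j.2 y}` parametrised by `j`: eliminating `j.2` from the
two equations leaves a quadratic equation in `j.1`, which is nontrivial because the pairs
`(l₁, l₂)` and `(l₃, l₄)` differ, and `j.1` determines `j.2`. -/
theorem card_slope_curves_le_two {l₁ l₂ l₃ l₄ : ℝ} (h₁₂ : l₁ < l₂) (h₃₄ : l₃ < l₄)
    (hne : ¬ (l₁ = l₃ ∧ l₂ = l₄)) (J : Finset (ℝ × ℝ)) (hJ : ∀ j ∈ J, 0 < j.1 ∧ 0 < j.2)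
    {x y x' y' : ℝ} (hx : 0 < x) (hy : 0 < y) (hx' : 0 < x') (hy' : 0 < y') (hyy : y < y')
    (h : ∀ j ∈ J, wmean l₁ l₂ j.1 x = wmean l₃ l₄ j.2 y)
    (h' : ∀ j ∈ J, wmean l₁ l₂ j.1 x' = wmean l₃ l₄ j.2 y') : J.card ≤ 2 := by
  by_contra hcard
  push Not at hcard
  have hinj : ∀ i ∈ J, ∀ j ∈ J, i ≠ j → i.1 ≠ j.1 := by
    intro i hi j hj hij he
    apply hij
    refine Prod.ext he ?_
    have e1 := h i hi
    rw [he, h j hj, wmean_eq_wmean_iff (hJ j hj).2 hy (hJ i hi).2 hy] at e1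
    have e2 : ((l₄ - l₃) * y) * i.2 = ((l₄ - l₃) * y) * j.2 := by linear_combination e1
    exact mul_left_cancel₀ (mul_pos (by linarith) hy).ne' e2
  have hquad : ∀ j ∈ J, ((l₁ - l₃) * (l₁ - l₄) * (y' - y)) * j.1 ^ 2 +
      ((l₁ - l₃) * (l₂ - l₄) * (x' * y' - x * y) + (l₂ - l₃) * (l₁ - l₄) * (x * y' - x' * y)) * j.1 +
      (l₂ - l₃) * (l₂ - l₄) * x * x' * (y' - y) = 0 := by
    intro j hj
    have e1 := (wmean_eq_wmean_iff (hJ j hj).1 hx (hJ j hj).2 hy).1 (h j hj)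
    have e2 := (wmean_eq_wmean_iff (hJ j hj).1 hx' (hJ j hj).2 hy').1 (h' j hj)
    apply mul_left_cancel₀ (hJ j hj).2.ne'
    linear_combination (y' * ((l₁ - l₄) * j.1 + (l₂ - l₄) * x')) * e1 -
      (y * ((l₁ - l₄) * j.1 + (l₂ - l₄) * x)) * e2
  obtain ⟨i, hi, j, hj, k, hk, hij, hik, hjk⟩ := two_lt_card.1 hcard
  obtain ⟨c0, c2⟩ := quadratic_eq_zero (hquad i hi) (hquad j hj) (hquad k hk)
    (hinj i hi j hj hij) (hinj i hi k hk hik) (hinj j hj k hk hjk)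
  have hyy' : y' - y ≠ 0 := by linarith
  simp only [mul_eq_zero, hyy', hx.ne', hx'.ne', or_false, sub_eq_zero] at c0 c2
  rcases c0 with c0 | c0 <;> rcases c2 with c2 | c2
  · linarith
  · exact hne ⟨c0, c2⟩
  · linarith
  · linarith

/-- Bound for the number of coincidences between the slopes obtained from two distinct pairs of
lines through the origin. -/
theorem sum_slope_collisions_le {l₁ l₂ l₃ l₄ : ℝ} (h₁₂ : l₁ < l₂) (h₃₄ : l₃ < l₄)
    (hne : ¬ (l₁ = l₃ ∧ l₂ = l₄)) (A₁ A₂ A₃ A₄ : Finset ℝ) (p₁ : ∀ x ∈ A₁, 0 < x)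
    (p₂ : ∀ x ∈ A₂, 0 < x) (p₃ : ∀ x ∈ A₃, 0 < x) (p₄ : ∀ x ∈ A₄, 0 < x) (n T : ℕ)
    (c₁ : A₁.card = n) (c₂ : A₂.card = n) (c₃ : A₃.card = n) (c₄ : A₄.card = n)
    (hT : 1 ≤ T) (hn : n ≤ T ^ 6) :
    ∑ i ∈ A₁ ×ˢ A₃, ((A₂ ×ˢ A₄).filter fun p =>
      wmean l₁ l₂ i.1 p.1 = wmean l₃ l₄ i.2 p.2).card ≤ 5 * n ^ 2 * T ^ 4 := by
  have hT' : (1 : ℝ) ≤ T := by exact_mod_cast hT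
  have hinc := grid_incidence (A₁ ×ˢ A₃) A₂ A₄ (fun i => (A₂ ×ˢ A₄).filter fun p =>
      wmean l₁ l₂ i.1 p.1 = wmean l₃ l₄ i.2 p.2) 2 (fun i _ => filter_subset _ _) ?_ ?_
      ((T : ℝ) ^ 4) (by positivity)
  · rw [card_product, c₁, c₂, c₃, c₄] at hinc
    have e1 : ((2 : ℕ) : ℝ) * ((n : ℝ) * n) ^ 2 / ((T : ℝ) ^ 4) ^ 2 ≤ 2 * (n : ℝ) ^ 2 * T ^ 4 := by
      rw [div_le_iff₀ (by positivity)]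
      have : (n : ℝ) ≤ (T : ℝ) ^ 6 := by exact_mod_cast hn
      calc ((2 : ℕ) : ℝ) * ((n : ℝ) * n) ^ 2 = 2 * (n : ℝ) ^ 2 * (n : ℝ) ^ 2 := by push_cast; ring
        _ ≤ 2 * (n : ℝ) ^ 2 * ((T : ℝ) ^ 6) ^ 2 := by gcongr
        _ = _ := by ring
    have e2 : (1 : ℝ) ≤ (T : ℝ) ^ 4 := one_le_pow₀ hT'
    have e3 : ((n * n : ℕ) : ℝ) * (1 + 2 * (T : ℝ) ^ 4) ≤ (n : ℝ) ^ 2 * (3 * (T : ℝ) ^ 4) := by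
      push_cast
      rw [← sq]
      gcongr
      linarith
    have e4 := hinc.trans (add_le_add e3 e1)
    have e5 : (n : ℝ) ^ 2 * (3 * (T : ℝ) ^ 4) + 2 * (n : ℝ) ^ 2 * T ^ 4 =
      5 * (n : ℝ) ^ 2 * (T : ℝ) ^ 4 := by ring
    rw [e5] at e4
    exact_mod_cast e4
  · rintro ⟨a, b⟩ hi ⟨x, y⟩ hp ⟨x', y'⟩ hq
    simp only [mem_filter, mem_product] at hi hp hq ⊢
    rw [← wmean_lt_iff h₁₂ (p₁ _ hi.1) (p₂ _ hp.1.1) (p₂ _ hq.1.1), hp.2, hq.2,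
      wmean_lt_iff h₃₄ (p₃ _ hi.2) (p₄ _ hp.1.2) (p₄ _ hq.1.2)]
  · rintro ⟨x, y⟩ ⟨x', y'⟩ hp hq h1 h2
    rw [mem_product] at hp hq
    apply card_slope_curves_le_two h₁₂ h₃₄ hne _ _ (p₂ _ hp.1) (p₄ _ hp.2) (p₂ _ hq.1) (p₄ _ hq.2) h2
    · intro j hj
      exact (mem_filter.1 (mem_filter.1 hj).2.1).2
    · intro j hj
      exact (mem_filter.1 (mem_filter.1 hj).2.2).2
    · intro j hj
      have := mem_product.1 (mem_filter.1 hj).1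
      exact ⟨p₁ _ this.1, p₃ _ this.2⟩

theorem two_mul_card_pairs (B : Finset ℝ) :
    2 * ((B ×ˢ B).filter fun p => p.1 < p.2).card + B.card = B.card * B.card := by
  have h1 : ((B ×ˢ B).filter fun p => p.2 < p.1).card =
      ((B ×ˢ B).filter fun p => p.1 < p.2).card := by
    refine card_nbij' Prod.swap Prod.swap ?_ ?_ ?_ ?_
    · rintro ⟨a, b⟩ h; simpa [and_comm] using h
    · rintro ⟨a, b⟩ h; simpa [and_comm] using h
    · intro p _; exact Prod.swap_swap p
    · intro p _; exact Prod.swap_swap p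
  have h2 : B.offDiag = ((B ×ˢ B).filter fun p => p.1 < p.2) ∪
      ((B ×ˢ B).filter fun p => p.2 < p.1) := by
    ext p
    simp only [mem_offDiag, mem_union, mem_filter, mem_product]
    rw [← and_or_left, ← ne_iff_lt_or_gt, and_assoc]
  have h3 : Disjoint ((B ×ˢ B).filter fun p => p.1 < p.2)
      ((B ×ˢ B).filter fun p => p.2 < p.1) := by
    rw [disjoint_filter]
    intro p _ h
    exact not_lt.2 h.le
  have h4 := card_union_of_disjoint h3
  rw [← h2, offDiag_card, h1] at h4
  have : B.card ≤ B.card * B.card := Nat.le_mul_self _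
  omega

/-- A block `B` of `T` lines through the origin with `n ≈ T ^ 6` points on each gives at least
`T ^ 2 * n / 644` slopes of vector sums, strictly between the extreme slopes of `B`. -/
theorem card_block_slopes (B Y : Finset ℝ) (F : ℝ → Finset ℝ) (n T : ℕ) (hB : B.card = T)
    (hT : 2 ≤ T) (hn1 : 1 ≤ n) (hn : n ≤ T ^ 6) (hn' : T ^ 6 ≤ 64 * n)
    (hF : ∀ l ∈ B, (F l).card = n) (hFpos : ∀ l ∈ B, ∀ x ∈ F l, 0 < x)
    (hY : ∀ l₁ ∈ B, ∀ l₂ ∈ B, ∀ x₁ ∈ F l₁, ∀ x₂ ∈ F l₂, wmean l₁ l₂ x₁ x₂ ∈ Y) :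
    T ^ 2 * n ≤ 644 * (Y.filter fun y => ∃ u ∈ B, ∃ v ∈ B, u < y ∧ y < v).card := by
  set Y₀ := Y.filter fun y => ∃ u ∈ B, ∃ v ∈ B, u < y ∧ y < v with hY₀
  set Pr := (B ×ˢ B).filter fun p => p.1 < p.2 with hPr
  have hPrmem : ∀ p ∈ Pr, p.1 ∈ B ∧ p.2 ∈ B ∧ p.1 < p.2 := by
    intro p hp
    simp only [hPr, mem_filter, mem_product] at hp
    exact ⟨hp.1.1, hp.1.2, hp.2⟩
  have hPrcard := two_mul_card_pairs B
  rw [← hPr, hB] at hPrcard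
  set X : Finset ((_ : ℝ × ℝ) × (ℝ × ℝ)) := Pr.sigma fun p => F p.1 ×ˢ F p.2 with hX
  have hXcard : X.card = Pr.card * n ^ 2 := by
    rw [hX, card_sigma, sum_const_nat (m := n ^ 2)]
    intro p hp
    obtain ⟨h1, h2, -⟩ := hPrmem p hp
    rw [card_product, hF _ h1, hF _ h2, sq]
  have hXmem : ∀ z ∈ X, z.1 ∈ Pr ∧ z.2.1 ∈ F z.1.1 ∧ z.2.2 ∈ F z.1.2 := by
    intro z hz
    simp only [hX, mem_sigma, mem_product] at hz
    exact hz
  have hXpos : ∀ z ∈ X, 0 < z.2.1 ∧ 0 < z.2.2 := by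
    intro z hz
    obtain ⟨h1, h2, h3⟩ := hXmem z hz
    obtain ⟨h4, h5, -⟩ := hPrmem _ h1
    exact ⟨hFpos _ h4 _ h2, hFpos _ h5 _ h3⟩
  set φ : (_ : ℝ × ℝ) × (ℝ × ℝ) → ℝ := fun z => wmean z.1.1 z.1.2 z.2.1 z.2.2 with hφ
  have hcs := card_sq_le_collisions X Y₀ φ (by
    intro z hz
    obtain ⟨h1, h2, h3⟩ := hXmem z hz
    obtain ⟨h4, h5, h6⟩ := hPrmem _ h1
    obtain ⟨h7, h8⟩ := hXpos z hz
    refine mem_filter.2 ⟨hY _ h4 _ h5 _ h2 _ h3, _, h4, _, h5, ?_, ?_⟩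
    · simp only [hφ, wmean]
      rw [lt_div_iff₀ (by positivity)]
      nlinarith
    · simp only [hφ, wmean]
      rw [div_lt_iff₀ (by positivity)]
      nlinarith)
  set E := (X ×ˢ X).filter fun xy => φ xy.1 = φ xy.2 with hE
  have hEmem : ∀ w ∈ E, w.1 ∈ X ∧ w.2 ∈ X ∧ φ w.1 = φ w.2 := by
    intro w hw
    simp only [hE, mem_filter, mem_product] at hw
    exact ⟨hw.1.1, hw.1.2, hw.2⟩
  have hE1 : E.card = ∑ pp ∈ Pr ×ˢ Pr, (E.filter fun w => (w.1.1, w.2.1) = pp).card :=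
    card_eq_sum_card_fiberwise (fun w hw => by
      obtain ⟨h1, h2, -⟩ := hEmem w hw
      exact mem_product.2 ⟨(hXmem _ h1).1, (hXmem _ h2).1⟩)
  -- for two equal pairs of lines, three of the four points determine the last one
  have hdiag : ∀ p ∈ Pr, (E.filter fun w => (w.1.1, w.2.1) = (p, p)).card ≤ n ^ 3 := by
    intro p hp
    obtain ⟨g1, g2, g3⟩ := hPrmem p hp
    have : n ^ 3 = (F p.1 ×ˢ (F p.2 ×ˢ F p.1)).card := by
      rw [card_product, card_product, hF _ g1, hF _ g2]; ring
    rw [this]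
    apply card_le_card_of_injOn (fun w => (w.1.2.1, w.1.2.2, w.2.2.1))
    · rintro ⟨⟨q, x⟩, ⟨q', x'⟩⟩ hw
      obtain ⟨hw1, hw2⟩ := mem_filter.1 (mem_coe.1 hw)
      obtain ⟨h1, h2, h3⟩ := hEmem _ hw1
      simp only [Prod.mk.injEq] at hw2
      obtain ⟨rfl, rfl⟩ := hw2
      simp only [coe_product, Set.mem_prod, mem_coe]
      exact ⟨(hXmem _ h1).2.1, (hXmem _ h1).2.2, (hXmem _ h2).2.1⟩
    · rintro ⟨⟨q, x⟩, ⟨q', x'⟩⟩ hw ⟨⟨r, y⟩, ⟨r', y'⟩⟩ hv h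
      obtain ⟨hw1, hw2⟩ := mem_filter.1 (mem_coe.1 hw)
      obtain ⟨hv1, hv2⟩ := mem_filter.1 (mem_coe.1 hv)
      obtain ⟨h1, h2, h3⟩ := hEmem _ hw1
      obtain ⟨h4, h5, h6⟩ := hEmem _ hv1
      simp only [Prod.mk.injEq] at hw2 hv2 h
      obtain ⟨rfl, rfl⟩ := hw2
      obtain ⟨rfl, rfl⟩ := hv2
      obtain ⟨e1, e2, e3⟩ := h
      have e4 : x = y := Prod.ext e1 e2
      subst e4
      have k := h3.symm.trans h6
      simp only [hφ] at k
      have k1 := hXpos _ h2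
      have k2 := hXpos _ h5
      rw [wmean_eq_wmean_iff k1.1 k1.2 k2.1 k2.2] at k
      simp only at k1 k2 k
      rw [← e3] at k
      have k3 : ((r'.2 - r'.1) * x'.1) * x'.2 = ((r'.2 - r'.1) * x'.1) * y'.2 := by
        linear_combination k
      have k4 := mul_left_cancel₀ (mul_pos (by linarith) k1.1).ne' k3
      rw [Prod.ext e3 k4]
  have hoff : ∀ p ∈ Pr, ∀ p' ∈ Pr, p ≠ p' →
      (E.filter fun w => (w.1.1, w.2.1) = (p, p')).card ≤ 5 * n ^ 2 * T ^ 4 := by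
    intro p hp p' hp' hpp
    obtain ⟨g1, g2, g3⟩ := hPrmem p hp
    obtain ⟨g1', g2', g3'⟩ := hPrmem p' hp'
    refine le_trans ?_ (sum_slope_collisions_le g3 g3' (fun h => hpp (Prod.ext h.1 h.2))
      (F p.1) (F p.2) (F p'.1) (F p'.2) (hFpos _ g1) (hFpos _ g2) (hFpos _ g1') (hFpos _ g2')
      n T (hF _ g1) (hF _ g2) (hF _ g1') (hF _ g2') (by omega) hn)
    rw [← card_sigma]
    apply card_le_card_of_injOn (fun w => (⟨(w.1.2.1, w.2.2.1), (w.1.2.2, w.2.2.2)⟩ :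
      (_ : ℝ × ℝ) × (ℝ × ℝ)))
    · rintro ⟨⟨q, x⟩, ⟨q', x'⟩⟩ hw
      obtain ⟨hw1, hw2⟩ := mem_filter.1 (mem_coe.1 hw)
      obtain ⟨h1, h2, h3⟩ := hEmem _ hw1
      simp only [Prod.mk.injEq] at hw2
      obtain ⟨rfl, rfl⟩ := hw2
      simp only [mem_coe, mem_sigma, mem_product, mem_filter]
      exact ⟨⟨(hXmem _ h1).2.1, (hXmem _ h2).2.1⟩, ⟨(hXmem _ h1).2.2, (hXmem _ h2).2.2⟩, h3⟩
    · rintro ⟨⟨q, x⟩, ⟨q', x'⟩⟩ hw ⟨⟨r, y⟩, ⟨r', y'⟩⟩ hv h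
      obtain ⟨hw1, hw2⟩ := mem_filter.1 (mem_coe.1 hw)
      obtain ⟨hv1, hv2⟩ := mem_filter.1 (mem_coe.1 hv)
      simp only [Prod.mk.injEq] at hw2 hv2
      simp only [Sigma.mk.injEq, heq_eq_eq, Prod.mk.injEq] at h
      obtain ⟨rfl, rfl⟩ := hw2
      obtain ⟨rfl, rfl⟩ := hv2
      rw [Prod.ext h.1.1 h.2.1, Prod.ext h.1.2 h.2.2]
  have hE2 : E.card ≤ Pr.card * n ^ 3 + Pr.card * Pr.card * (5 * n ^ 2 * T ^ 4) := by
    rw [hE1]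
    calc ∑ pp ∈ Pr ×ˢ Pr, (E.filter fun w => (w.1.1, w.2.1) = pp).card
        ≤ ∑ pp ∈ Pr ×ˢ Pr, ((if pp.1 = pp.2 then n ^ 3 else 0) + 5 * n ^ 2 * T ^ 4) := by
          refine sum_le_sum fun pp hpp => ?_
          obtain ⟨p, p'⟩ := pp
          obtain ⟨h1, h2⟩ := mem_product.1 hpp
          by_cases h : p = p'
          · subst h
            rw [if_pos rfl]
            exact (hdiag _ h1).trans (Nat.le_add_right _ _)
          · rw [if_neg h, zero_add]
            exact hoff _ h1 _ h2 h
      _ = _ := by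
          rw [sum_add_distrib, sum_const, card_product, smul_eq_mul, sum_product]
          simp
  have hPrpos : 0 < Pr.card := by nlinarith
  rw [hXcard] at hcs
  set P := Pr.card
  set y := Y₀.card
  have hcs2 : (P * n ^ 2) ^ 2 ≤ y * (P * n ^ 3 + P * P * (5 * n ^ 2 * T ^ 4)) :=
    hcs.trans (Nat.mul_le_mul_left _ hE2)
  have hcs3 : P * n ^ 2 ≤ y * (n + 5 * P * T ^ 4) := by
    have : (P * n ^ 2) * (P * n ^ 2) ≤ (P * n ^ 2) * (y * (n + 5 * P * T ^ 4)) := by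
      calc (P * n ^ 2) * (P * n ^ 2) = (P * n ^ 2) ^ 2 := by ring
        _ ≤ _ := hcs2
        _ = _ := by ring
    exact Nat.le_of_mul_le_mul_left this (by positivity)
  have h5 : 5 * P * T ^ 4 ≤ 160 * n := by
    have : 2 * P ≤ T * T := by omega
    have : 2 * P * T ^ 4 ≤ T * T * T ^ 4 := Nat.mul_le_mul_right _ this
    have : T * T * T ^ 4 = T ^ 6 := by ring
    nlinarith
  have h6 : P * n ≤ 161 * y := by
    have : n * (P * n) ≤ n * (161 * y) := by
      calc n * (P * n) = P * n ^ 2 := by ring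
        _ ≤ _ := hcs3
        _ ≤ y * (n + 160 * n) := by gcongr
        _ = _ := by ring
    exact Nat.le_of_mul_le_mul_left this hn1
  have h7 : T ^ 2 ≤ 4 * P := by nlinarith
  calc T ^ 2 * n ≤ 4 * P * n := Nat.mul_le_mul_right _ h7
    _ ≤ 644 * y := by linarith

/-- The `T` smallest elements of `L`. -/
theorem exists_lower_block (L : Finset ℝ) (T : ℕ) (hT : T ≤ L.card) :
    ∃ B ⊆ L, B.card = T ∧ ∀ b ∈ B, ∀ c ∈ L \ B, b < c := by
  induction T with
  | zero => exact ⟨∅, by simp⟩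
  | succ T ih =>
    obtain ⟨B, hB, hc, hlt⟩ := ih (by omega)
    have hne : (L \ B).Nonempty := by
      rw [← card_pos, card_sdiff_of_subset hB]
      omega
    have hmin := min'_mem (L \ B) hne
    set x := (L \ B).min' hne with hx
    obtain ⟨hxL, hxB⟩ := mem_sdiff.1 hmin
    refine ⟨insert x B, insert_subset hxL hB, by rw [card_insert_of_notMem hxB, hc], ?_⟩
    intro b hb c hc
    rw [mem_sdiff, mem_insert, not_or] at hc
    have hc' : c ∈ L \ B := mem_sdiff.2 ⟨hc.1, hc.2.2⟩
    rcases mem_insert.1 hb with rfl | hb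
    · exact lt_of_le_of_ne (min'_le _ _ hc') (Ne.symm hc.2.1)
    · exact hlt b hb c hc'

/-- If every `T`-subset of `L` has at least `w` elements of `Y` strictly between two of its members,
then splitting `L` into consecutive blocks of size `T` gives disjoint contributions to `Y`. -/
theorem card_blocks (Y : Finset ℝ) (T w : ℕ) (n : ℕ) : ∀ L : Finset ℝ, n * T ≤ L.card →
    (∀ B ⊆ L, B.card = T → w ≤ (Y.filter fun y => ∃ u ∈ B, ∃ v ∈ B, u < y ∧ y < v).card) →
    n * w ≤ (Y.filter fun y => ∃ u ∈ L, ∃ v ∈ L, u < y ∧ y < v).card := by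
  induction n with
  | zero => intros; simp
  | succ n ih =>
    intro L hL hw
    rw [add_mul, one_mul] at hL
    obtain ⟨B, hB, hc, hlt⟩ := exists_lower_block L T (by omega)
    have h1 := ih (L \ B) (by rw [card_sdiff_of_subset hB]; omega)
      (fun B' hB' => hw B' (hB'.trans sdiff_subset))
    have h2 := hw B hB hc
    have hdisj : Disjoint (Y.filter fun y => ∃ u ∈ L \ B, ∃ v ∈ L \ B, u < y ∧ y < v)
        (Y.filter fun y => ∃ u ∈ B, ∃ v ∈ B, u < y ∧ y < v) := by
      rw [disjoint_filter]
      rintro y _ ⟨u, hu, -, -, huy, -⟩ ⟨-, -, v, hv, -, hyv⟩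
      have := hlt v hv u hu
      linarith
    have h3 : (Y.filter fun y => ∃ u ∈ L \ B, ∃ v ∈ L \ B, u < y ∧ y < v) ∪
        (Y.filter fun y => ∃ u ∈ B, ∃ v ∈ B, u < y ∧ y < v) ⊆
        (Y.filter fun y => ∃ u ∈ L, ∃ v ∈ L, u < y ∧ y < v) := by
      apply union_subset
      · intro y hy
        obtain ⟨h, u, hu, v, hv, k⟩ := mem_filter.1 hy
        exact mem_filter.2 ⟨h, u, sdiff_subset hu, v, sdiff_subset hv, k⟩
      · intro y hy
        obtain ⟨h, u, hu, v, hv, k⟩ := mem_filter.1 hy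
        exact mem_filter.2 ⟨h, u, hB hu, v, hB hv, k⟩
    have h4 := card_le_card h3
    rw [card_union_of_disjoint hdisj] at h4
    rw [add_mul, one_mul]
    omega

theorem exists_sixth_root (n : ℕ) (hn : 1 ≤ n) : ∃ T : ℕ, 2 ≤ T ∧ n ≤ T ^ 6 ∧ T ^ 6 ≤ 64 * n := by
  induction n, hn using Nat.le_induction with
  | base => exact ⟨2, by norm_num⟩
  | succ n hn ih =>
    obtain ⟨T, h1, h2, h3⟩ := ih
    by_cases h : n + 1 ≤ T ^ 6
    · exact ⟨T, h1, h, by omega⟩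
    · refine ⟨T + 1, by omega, ?_, ?_⟩
      · have : T ^ 6 < (T + 1) ^ 6 := Nat.pow_lt_pow_left (by omega) (by norm_num)
        omega
      · have : (T + 1) ^ 6 ≤ (2 * T) ^ 6 := Nat.pow_le_pow_left (by omega) 6
        have e : (2 * T) ^ 6 = 64 * T ^ 6 := by ring
        omega

/-- The elements `x` of `A` with `l * x ∈ A`: the points of `A × A` on the line through the
origin of slope `l`. -/
noncomputable def rayPts (A : Finset ℝ) (l : ℝ) : Finset ℝ := A.filter fun x => l * x ∈ A

/-- Pigeonhole over the levels `1, …, |A|`: a level `k`, not much smaller than the average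
`|A| ^ 2 / |A/A|`, such that at least about `|A| ^ 2 / k` slopes, up to a logarithm, carry at least
`k` points of `A × A`. -/
theorem exists_popular (A : Finset ℝ) (hA : ∀ x ∈ A, 0 < x) (hne : A.Nonempty) :
    ∃ k : ℕ, 1 ≤ k ∧ k ≤ A.card ∧ (A.card : ℝ) ^ 2 ≤ 4 * (A / A).card * k ∧
      (A.card : ℝ) ^ 2 ≤ 2 * (1 + Real.log A.card) * k *
        ((A / A).filter fun l => k ≤ (rayPts A l).card).card := by
  set a := A.card with ha
  have ha1 : 1 ≤ a := card_pos.2 hne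
  have ha1' : (1 : ℝ) ≤ a := by exact_mod_cast ha1
  have hlog : 0 ≤ Real.log a := Real.log_nonneg ha1'
  set H := 1 + Real.log a with hH
  have hH0 : 0 < H := by linarith
  set x := (A / A).card with hx
  have hx1 : 1 ≤ x := card_pos.2 (hne.div hne)
  have hx0 : (0 : ℝ) < x := by exact_mod_cast hx1
  set L : ℕ → Finset ℝ := fun k => (A / A).filter fun l => k ≤ (rayPts A l).card with hL
  have h1 : a ^ 2 ≤ ∑ l ∈ A / A, (rayPts A l).card := by
    rw [sq, ← card_product, ← card_sigma]
    apply card_le_card_of_injOn (fun p => (⟨p.2 / p.1, p.1⟩ : (_ : ℝ) × ℝ))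
    · rintro ⟨u, v⟩ hp
      obtain ⟨hu, hv⟩ := mem_product.1 (mem_coe.1 hp)
      simp only [mem_coe, mem_sigma, rayPts, mem_filter]
      refine ⟨div_mem_div hv hu, hu, ?_⟩
      rw [div_mul_cancel₀ _ (hA _ hu).ne']
      exact hv
    · rintro ⟨u, v⟩ hp ⟨u', v'⟩ hp' h
      obtain ⟨hu, hv⟩ := mem_product.1 (mem_coe.1 hp)
      simp only [Sigma.mk.injEq, heq_eq_eq] at h
      obtain ⟨h, rfl⟩ := h
      rw [div_left_inj' (hA _ hu).ne'] at h
      rw [h]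
  have h2 : ∑ l ∈ A / A, (rayPts A l).card = ∑ k ∈ Icc 1 a, (L k).card := by
    calc ∑ l ∈ A / A, (rayPts A l).card
        = ∑ l ∈ A / A, ∑ k ∈ Icc 1 a, if k ≤ (rayPts A l).card then 1 else 0 := by
          refine sum_congr rfl fun l _ => ?_
          rw [← sum_filter, sum_const, smul_eq_mul, mul_one]
          have : (Icc 1 a).filter (fun k => k ≤ (rayPts A l).card) = Icc 1 (rayPts A l).card := by
            ext k
            have : (rayPts A l).card ≤ a := card_le_card (filter_subset _ _)
            simp only [mem_Icc, mem_filter]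
            omega
          rw [this, Nat.card_Icc]
          omega
      _ = _ := by
          rw [sum_comm]
          refine sum_congr rfl fun k _ => ?_
          rw [← sum_filter, sum_const, smul_eq_mul, mul_one]
  have h3 : (a : ℝ) ^ 2 ≤ ∑ k ∈ Icc 1 a, ((L k).card : ℝ) := by
    rw [h2] at h1
    exact_mod_cast h1
  by_contra hcon
  push Not at hcon
  have h4 : ∀ k ∈ Icc 1 a, ((L k).card : ℝ) ≤
      (if 4 * (x : ℝ) * k < (a : ℝ) ^ 2 then (x : ℝ) else 0) + (a : ℝ) ^ 2 / (2 * H) * (k : ℝ)⁻¹ := by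
    intro k hk
    obtain ⟨hk1, hk2⟩ := mem_Icc.1 hk
    have hk0 : (0 : ℝ) < k := by exact_mod_cast hk1
    split_ifs with h
    · have e1 : ((L k).card : ℝ) ≤ x := by exact_mod_cast card_le_card (filter_subset _ _)
      have : 0 ≤ (a : ℝ) ^ 2 / (2 * H) * (k : ℝ)⁻¹ := by positivity
      linarith
    · rw [zero_add, ← div_eq_mul_inv, div_div, le_div_iff₀ (by positivity)]
      have := hcon k hk1 hk2 (not_lt.1 h)
      linarith
  have h5 : ∑ k ∈ Icc 1 a, (if 4 * (x : ℝ) * k < (a : ℝ) ^ 2 then (x : ℝ) else 0) ≤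
      (a : ℝ) ^ 2 / 4 := by
    rw [← sum_filter, sum_const, nsmul_eq_mul]
    have e1 : (Icc 1 a).filter (fun k : ℕ => 4 * (x : ℝ) * k < (a : ℝ) ^ 2) ⊆
        Icc 1 ⌊(a : ℝ) ^ 2 / (4 * x)⌋₊ := by
      intro k hk
      obtain ⟨hk, hk'⟩ := mem_filter.1 hk
      rw [mem_Icc]
      refine ⟨(mem_Icc.1 hk).1, Nat.le_floor ?_⟩
      rw [le_div_iff₀ (by positivity)]
      linarith
    have e2 := card_le_card e1
    rw [Nat.card_Icc, Nat.add_sub_cancel] at e2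
    have e3 : (((Icc 1 a).filter (fun k : ℕ => 4 * (x : ℝ) * k < (a : ℝ) ^ 2)).card : ℝ) ≤
        (a : ℝ) ^ 2 / (4 * x) :=
      (Nat.cast_le.2 e2).trans (Nat.floor_le (by positivity))
    calc _ ≤ (a : ℝ) ^ 2 / (4 * x) * x := by gcongr
      _ = _ := by field_simp
  have h6 : ∑ k ∈ Icc 1 a, (a : ℝ) ^ 2 / (2 * H) * (k : ℝ)⁻¹ ≤ (a : ℝ) ^ 2 / 2 := by
    rw [← mul_sum]
    calc _ ≤ (a : ℝ) ^ 2 / (2 * H) * H := by gcongr; exact sum_inv_le a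
      _ = _ := by field_simp
  have h7 := h3.trans (sum_le_sum h4)
  rw [sum_add_distrib] at h7
  nlinarith

/-- The inequality `|A| ^ 14 ≤ K * (1 + log |A|) ^ 18 * |S/S| ^ 6 * |A/A|` with `S = A + A`. -/
theorem card_pow_le_card_div (A : Finset ℝ) (hA : ∀ x ∈ A, 0 < x) (hne : A.Nonempty) :
    (A.card : ℝ) ^ 14 ≤ 10 ^ 22 * (1 + Real.log A.card) ^ 18 *
      (((A + A) / (A + A)).card : ℝ) ^ 6 * (A / A).card := by
  obtain ⟨n, hn1, hna, hpop1, hpop2⟩ := exists_popular A hA hne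
  obtain ⟨T, hT, hnT, hTn⟩ := exists_sixth_root n hn1
  set Y := (A + A) / (A + A) with hY
  set L := (A / A).filter fun l => n ≤ (rayPts A l).card with hL
  set a := A.card with ha
  have ha1' : (1 : ℝ) ≤ a := by exact_mod_cast (card_pos.2 hne : 1 ≤ A.card)
  have hlog : 0 ≤ Real.log a := Real.log_nonneg ha1'
  set H := 1 + Real.log a with hH
  have hH1 : 1 ≤ H := by linarith
  set x := (A / A).card with hx
  have hx1 : 1 ≤ x := card_pos.2 (hne.div hne)
  have hx1' : (1 : ℝ) ≤ x := by exact_mod_cast hx1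
  have hq1 : 1 ≤ Y.card := card_pos.2 ((hne.add hne).div (hne.add hne))
  have hq1' : (1 : ℝ) ≤ Y.card := by exact_mod_cast hq1
  have hnT' : (n : ℝ) ≤ (T : ℝ) ^ 6 := by exact_mod_cast hnT
  have hTn' : (T : ℝ) ^ 6 ≤ 64 * n := by exact_mod_cast hTn
  have hna' : (n : ℝ) ≤ a := by exact_mod_cast hna
  by_cases hLT : T ≤ L.card
  · -- exactly `n` points are kept on each line, as the block bound requires
    have hF : ∀ l : ℝ, ∃ F : Finset ℝ, l ∈ L → F ⊆ rayPts A l ∧ F.card = n := by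
      intro l
      by_cases hl : l ∈ L
      · obtain ⟨F, h1, h2⟩ := exists_subset_card_eq (mem_filter.1 hl).2
        exact ⟨F, fun _ => ⟨h1, h2⟩⟩
      · exact ⟨∅, fun h => absurd h hl⟩
    choose F hF using hF
    have hblock : ∀ B ⊆ L, B.card = T → (T ^ 2 * n + 643) / 644 ≤
        (Y.filter fun y => ∃ u ∈ B, ∃ v ∈ B, u < y ∧ y < v).card := by
      intro B hB hc
      have := card_block_slopes B Y F n T hc hT hn1 hnT hTn (fun l hl => (hF l (hB hl)).2)
        (fun l hl x hx => hA x (mem_filter.1 ((hF l (hB hl)).1 hx)).1) (by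
          intro l₁ hl₁ l₂ hl₂ x₁ hx₁ x₂ hx₂
          have h1 := mem_filter.1 ((hF _ (hB hl₁)).1 hx₁)
          have h2 := mem_filter.1 ((hF _ (hB hl₂)).1 hx₂)
          exact div_mem_div (add_mem_add h1.2 h2.2) (add_mem_add h1.1 h2.1))
      omega
    have hb := card_blocks Y T _ (L.card / T) L (Nat.div_mul_le_self _ _) hblock
    have hb2 := hb.trans (card_le_card (filter_subset _ _))
    have hb3 : L.card * T * n ≤ 1288 * Y.card := by
      set j := L.card / T with hj
      have hj1 : 1 ≤ j := (Nat.one_le_div_iff (by omega)).2 hLT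
      have e1 : L.card ≤ 2 * (j * T) := by
        have := Nat.div_add_mod L.card T
        have h3 := Nat.mod_lt L.card (show 0 < T by omega)
        rw [← hj] at this
        nlinarith
      have e2 : T ^ 2 * n ≤ 644 * ((T ^ 2 * n + 643) / 644) := by omega
      calc L.card * T * n ≤ 2 * (j * T) * T * n := by gcongr
        _ = 2 * (j * (T ^ 2 * n)) := by ring
        _ ≤ 2 * (j * (644 * ((T ^ 2 * n + 643) / 644))) := by gcongr
        _ = 1288 * (j * ((T ^ 2 * n + 643) / 644)) := by ring
        _ ≤ _ := by gcongr
    have hb4 : (L.card : ℝ) * T * n ≤ 1288 * Y.card := by exact_mod_cast hb3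
    have h1 : (a : ℝ) ^ 2 * T ≤ 2576 * H * Y.card := by
      calc (a : ℝ) ^ 2 * T ≤ (2 * H * n * L.card) * T := by gcongr
        _ = 2 * H * (L.card * T * n) := by ring
        _ ≤ 2 * H * (1288 * Y.card) := by gcongr
        _ = _ := by ring
    calc (a : ℝ) ^ 14 = (a : ℝ) ^ 12 * (a : ℝ) ^ 2 := by ring
      _ ≤ (a : ℝ) ^ 12 * (4 * x * n) := by gcongr
      _ ≤ (a : ℝ) ^ 12 * (4 * x * (T : ℝ) ^ 6) := by gcongr
      _ = 4 * x * ((a : ℝ) ^ 2 * T) ^ 6 := by ring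
      _ ≤ 4 * x * (2576 * H * Y.card) ^ 6 := by gcongr
      _ = (4 * 2576 ^ 6) * H ^ 6 * (Y.card : ℝ) ^ 6 * x := by ring
      _ ≤ 10 ^ 22 * H ^ 18 * (Y.card : ℝ) ^ 6 * x := by
        gcongr
        · norm_num
        · norm_num
  · -- fewer slopes than one block: then `a` is bounded by a power of `H`
    have hLT' : (L.card : ℝ) ≤ T := by exact_mod_cast (not_le.1 hLT).le
    have h1 : (a : ℝ) ≤ 2 * H * T := by
      have : (a : ℝ) * a ≤ a * (2 * H * T) := by
        calc (a : ℝ) * a = (a : ℝ) ^ 2 := by ring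
          _ ≤ _ := hpop2
          _ ≤ 2 * H * a * T := by gcongr
          _ = _ := by ring
      exact le_of_mul_le_mul_left this (by linarith)
    have h2 : (a : ℝ) ^ 5 ≤ 4096 * H ^ 6 := by
      have : (a : ℝ) * a ^ 5 ≤ a * (4096 * H ^ 6) := by
        calc (a : ℝ) * a ^ 5 = (a : ℝ) ^ 6 := by ring
          _ ≤ (2 * H * T) ^ 6 := by gcongr
          _ = 64 * H ^ 6 * (T : ℝ) ^ 6 := by ring
          _ ≤ 64 * H ^ 6 * (64 * a) := by gcongr; linarith
          _ = _ := by ring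
      exact le_of_mul_le_mul_left this (by linarith)
    calc (a : ℝ) ^ 14 ≤ (a : ℝ) ^ 15 := pow_le_pow_right₀ ha1' (by norm_num)
      _ = ((a : ℝ) ^ 5) ^ 3 := by ring
      _ ≤ (4096 * H ^ 6) ^ 3 := by gcongr
      _ = 4096 ^ 3 * H ^ 18 * 1 * 1 := by ring
      _ ≤ 10 ^ 22 * H ^ 18 * (Y.card : ℝ) ^ 6 * x := by
        gcongr
        · norm_num
        · exact one_le_pow₀ hq1'

/-! ### Combination of the bounds -/

theorem combine_bounds (a H m q x N K₃ K₄ : ℝ) (ha : 0 < a) (hH : 0 < H) (hm : 0 < m)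
    (hq : 0 < q) (hx : 0 < x) (hN : 0 < N) (hK₃ : 0 < K₃) (hK₄ : 0 < K₄)
    (h1 : x ^ 3 * m ^ 6 ≤ 64 * N ^ 8) (h2 : q * m ≤ N ^ 2)
    (h3 : a ^ 14 ≤ K₃ * H ^ 18 * q ^ 6 * x) (h4 : a ^ 2 ≤ K₄ * H * m) :
    a ^ 90 ≤ (64 * K₃ ^ 3 * K₄ ^ 24) * H ^ 78 * N ^ 44 := by
  have e1 : a ^ 14 * m ^ 6 ≤ K₃ * H ^ 18 * x * N ^ 12 := by
    calc a ^ 14 * m ^ 6 ≤ (K₃ * H ^ 18 * q ^ 6 * x) * m ^ 6 := by gcongr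
      _ = K₃ * H ^ 18 * x * (q * m) ^ 6 := by ring
      _ ≤ K₃ * H ^ 18 * x * (N ^ 2) ^ 6 := by gcongr
      _ = _ := by ring
  have e2 : a ^ 42 * m ^ 24 ≤ 64 * K₃ ^ 3 * H ^ 54 * N ^ 44 := by
    calc a ^ 42 * m ^ 24 = (a ^ 14 * m ^ 6) ^ 3 * m ^ 6 := by ring
      _ ≤ (K₃ * H ^ 18 * x * N ^ 12) ^ 3 * m ^ 6 := by gcongr
      _ = K₃ ^ 3 * H ^ 54 * N ^ 36 * (x ^ 3 * m ^ 6) := by ring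
      _ ≤ K₃ ^ 3 * H ^ 54 * N ^ 36 * (64 * N ^ 8) := by gcongr
      _ = _ := by ring
  calc a ^ 90 = a ^ 42 * (a ^ 2) ^ 24 := by ring
    _ ≤ a ^ 42 * (K₄ * H * m) ^ 24 := by gcongr
    _ = K₄ ^ 24 * H ^ 24 * (a ^ 42 * m ^ 24) := by ring
    _ ≤ K₄ ^ 24 * H ^ 24 * (64 * K₃ ^ 3 * H ^ 54 * N ^ 44) := by gcongr
    _ = _ := by ring

theorem card_pow_ninety_le (A : Finset ℝ) (hA : ∀ x ∈ A, 0 < x) (hne : A.Nonempty) :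
    (A.card : ℝ) ^ 90 ≤ (64 * (10 ^ 22) ^ 3 * 3100 ^ 24) * (1 + Real.log A.card) ^ 78 *
      (((A + A) * (A + A) * (A + A)).card : ℝ) ^ 44 := by
  have hSpos : ∀ s ∈ A + A, 0 < s := by
    intro s hs
    obtain ⟨a, ha, b, hb, rfl⟩ := mem_add.1 hs
    have := hA _ ha; have := hA _ hb
    positivity
  have hSne := hne.add hne
  have ha1 : (1 : ℝ) ≤ A.card := by exact_mod_cast (card_pos.2 hne : 1 ≤ A.card)
  have hlog : 0 ≤ Real.log A.card := Real.log_nonneg ha1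
  refine combine_bounds (A.card) (1 + Real.log A.card) (((A + A) * (A + A)).card)
    (((A + A) / (A + A)).card) ((A / A).card) _ _ _ (by linarith) (by linarith) ?_ ?_ ?_ ?_
    (by norm_num) (by norm_num) ?_ ?_ (card_pow_le_card_div A hA hne) (card_sq_le_card_mul A hA hne)
  · exact_mod_cast card_pos.2 (hSne.mul hSne)
  · exact_mod_cast card_pos.2 (hSne.div hSne)
  · exact_mod_cast card_pos.2 (hne.div hne)
  · exact_mod_cast card_pos.2 ((hSne.mul hSne).mul hSne)
  · exact_mod_cast card_ratio_pow_le A hA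
  · exact_mod_cast card_div_mul_card_mul_le (A + A) hSpos

theorem three_fold_product_of_sumset :
    ∃ c C : ℝ, 0 < c ∧ 0 < C ∧
      ∀ A : Finset ℝ, (∀ x ∈ A, 0 < x) → 2 ≤ A.card →
        c * (A.card : ℝ) ^ ((2 : ℝ) + 1 / 32) / (Real.log A.card) ^ C ≤
          (((A + A) * (A + A) * (A + A)).card : ℝ) := by
  obtain ⟨K, hK, hK0⟩ : ∃ K : ℝ, K = 64 * (10 ^ 22) ^ 3 * 3100 ^ 24 ∧ 0 < K :=
    ⟨_, rfl, by norm_num⟩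
  refine ⟨(K * 3 ^ 78)⁻¹ ^ ((1 : ℝ) / 44), 78 / 44, by positivity, by norm_num, ?_⟩
  intro A hA h2
  have hne : A.Nonempty := card_pos.1 (by omega)
  have hmain := card_pow_ninety_le A hA hne
  rw [← hK] at hmain
  set N : ℝ := (((A + A) * (A + A) * (A + A)).card : ℝ) with hN
  have ha2 : (2 : ℝ) ≤ A.card := by exact_mod_cast h2
  set a : ℝ := (A.card : ℝ) with ha
  have hlog2 : (1 : ℝ) / 2 ≤ Real.log a := by
    have := Real.log_two_gt_d9
    have := Real.log_le_log (by norm_num) ha2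
    linarith
  set l := Real.log a with hl
  have hl0 : 0 < l := by linarith
  rw [div_le_iff₀ (by positivity)]
  -- both sides are compared after raising to the power `44`
  refine le_of_pow_le_pow_left₀ (n := 44) (by norm_num) (by positivity) ?_
  have e1 : ((K * 3 ^ 78)⁻¹ ^ ((1 : ℝ) / 44)) ^ 44 = (K * 3 ^ 78)⁻¹ := by
    rw [← Real.rpow_natCast, ← Real.rpow_mul (by positivity)]
    norm_num
  have e2 : (l ^ ((78 : ℝ) / 44)) ^ 44 = l ^ 78 := by
    rw [← Real.rpow_natCast, ← Real.rpow_mul (by positivity), ← Real.rpow_natCast l 78]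
    norm_num
  have e3 : (a ^ ((2 : ℝ) + 1 / 32)) ^ 44 ≤ a ^ 90 := by
    rw [← Real.rpow_natCast, ← Real.rpow_mul (by positivity), ← Real.rpow_natCast a 90]
    exact Real.rpow_le_rpow_of_exponent_le (by linarith) (by norm_num)
  rw [mul_pow, mul_pow, e1, e2, inv_mul_le_iff₀ (by positivity)]
  calc (a ^ ((2 : ℝ) + 1 / 32)) ^ 44 ≤ a ^ 90 := e3
    _ ≤ K * (1 + l) ^ 78 * N ^ 44 := hmain
    _ ≤ K * (3 * l) ^ 78 * N ^ 44 := by gcongr; linarith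
    _ = K * 3 ^ 78 * (N ^ 44 * l ^ 78) := by rw [mul_pow]; ring
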